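/- arXiv:2106.09615 — 2 statements merged into one kernel-verified Lean document; each statement's English description precedes it below -/
import Mathlib

section
/- There exist absolute constants c > 0, K ≥ 1 and c0 > 0 such that the following holds. Let p be a prime, g a primitive root modulo p, and define exp : F_p^* → F_p^* by exp(x) = g^{ι(x)}, where ι(x) ∈ {1, …, p−1} is the integer representative of x. Then for every finite set A ⊆ F_p^* with |A| < sqrt(p), one has max{ Sid^+_K(A), Sid^+_K(exp(A)) } ≥ c0·|A|^{1/2 + c}, where exp(A) = {exp(a) : a ∈ A}. -/
open scoped BigOperators

/-- The number of pairs `(x, y) ∈ S × S` with `x - y = mu`. -/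
noncomputable def subPairCount {F : Type*} [Sub F] (mu : F) (S : Finset F) : ℕ :=
  Set.ncard {q : F × F | q.1 ∈ S ∧ q.2 ∈ S ∧ q.1 - q.2 = mu}

/-- `S` is additively `K`-Sidon: for every `mu ≠ 0` the number of pairs
`(x, y) ∈ S × S` with `x - y = mu` is at most `K`. -/
def IsAddSidon {F : Type*} [SubtractionMonoid F] (K : ℝ) (S : Finset F) : Prop :=
  ∀ mu : F, mu ≠ 0 → (subPairCount mu S : ℝ) ≤ K
open scoped BigOperators
namespace S10
open scoped Classical Pointwise
open Finset

lemma popular_count {ι : Type*} (X : Finset ι) (f : ι → ℝ) (M θ : ℝ)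
    (hM : ∀ x ∈ X, f x ≤ M) (h : 2 * θ * X.card ≤ ∑ x ∈ X, f x) (hθ : 0 ≤ θ) :
    θ * X.card ≤ M * (X.filter (fun x => θ ≤ f x)).card := by
  have h1 : ∑ x ∈ X, f x ≤ M * (X.filter (fun x => θ ≤ f x)).card + θ * X.card := by
    rw [← Finset.sum_filter_add_sum_filter_not X (fun x => θ ≤ f x)]
    apply add_le_add
    · rw [mul_comm, ← nsmul_eq_mul]
      exact Finset.sum_le_card_nsmul _ _ _ (fun x hx => hM x (Finset.mem_filter.1 hx).1)
    · calc _ ≤ ((X.filter (fun x => ¬ θ ≤ f x)).card : ℝ) * θ := by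
            rw [← nsmul_eq_mul]
            apply Finset.sum_le_card_nsmul
            intro x hx
            exact (not_le.1 (Finset.mem_filter.1 hx).2).le
        _ ≤ (X.card : ℝ) * θ := by
            gcongr
            exact Finset.filter_subset _ _
        _ = _ := mul_comm _ _
  linarith

lemma double_count {ι α : Type*} (I : Finset ι) (X : Finset α) (R : ι → α → Prop)
    [∀ i x, Decidable (R i x)] :
    ∑ i ∈ I, ((X.filter (fun x => R i x)).card : ℝ)
      = ∑ x ∈ X, ((I.filter (fun i => R i x)).card : ℝ) := by
  simp only [Finset.card_filter, Nat.cast_sum]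
  rw [Finset.sum_comm]

lemma cs_count {ι α : Type*} (I : Finset ι) (X : Finset α) (R : ι → α → Prop)
    [∀ i x, Decidable (R i x)] :
    (∑ i ∈ I, ((X.filter (fun x => R i x)).card : ℝ)) ^ 2 ≤
      X.card * ∑ i ∈ I, ∑ j ∈ I, ((X.filter (fun x => R i x ∧ R j x)).card : ℝ) := by
  rw [double_count]
  refine (sq_sum_le_card_mul_sum_sq).trans (le_of_eq ?_)
  congr 1
  have : ∀ i, ∑ j ∈ I, ((X.filter (fun x => R i x ∧ R j x)).card : ℝ)
      = ∑ x ∈ X, ((I.filter (fun j => R i x ∧ R j x)).card : ℝ) := fun i =>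
    double_count I X (fun j x => R i x ∧ R j x)
  simp_rw [this]
  rw [Finset.sum_comm]
  refine Finset.sum_congr rfl fun x _ => ?_
  have h2 : ∀ i, ((I.filter (fun j => R i x ∧ R j x)).card : ℝ)
      = if R i x then ((I.filter (fun j => R j x)).card : ℝ) else 0 := by
    intro i
    split_ifs with h <;> simp [h]
  simp_rw [h2]
  rw [← Finset.sum_filter, Finset.sum_const, nsmul_eq_mul, sq]

lemma aux_sub4 {G : Type*} [AddCommGroup G] (a b c d e : G) :
    a - b - (c - b) + (c - d) - (e - d) = a - e := by abel

set_option maxHeartbeats 1000000 in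
lemma bsg {G : Type*} [AddCommGroup G] [DecidableEq G] (P Z : Finset G) (α : ℝ) (hα : 0 < α)
    (hP : P.Nonempty)
    (h : α * (P.card : ℝ) ^ 2 ≤ ∑ y ∈ P, ((P.filter (fun x => x - y ∈ Z)).card : ℝ)) :
    ∃ S ⊆ P, α * P.card / 4 ≤ S.card ∧
      ((S - S).card : ℝ) * (α ^ 5 * (P.card : ℝ) ^ 3) ≤ 1024 * (Z.card : ℝ) ^ 4 := by
  set n : ℝ := (P.card : ℝ) with hn
  have hn0 : 0 < n := by rw [hn]; exact_mod_cast hP.card_pos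
  set cd : G → G → ℝ := fun x x' => ((P.filter (fun y => x - y ∈ Z ∧ x' - y ∈ Z)).card : ℝ) with hcd
  have hcdsymm : ∀ x x', cd x x' = cd x' x := by
    intro x x'; simp only [hcd]; congr 2; ext y; simp only [and_comm]
  set bad : G → G → Prop := fun x x' => cd x x' < α ^ 2 * n / 16 with hbad
  set Nb : G → Finset G := fun y => P.filter (fun x => x - y ∈ Z) with hNb
  -- number of bad pairs inside Nb y
  set bp : G → ℝ := fun y => ((((P ×ˢ P).filter (fun q => bad q.1 q.2)).filter
      (fun q => q.1 - y ∈ Z ∧ q.2 - y ∈ Z)).card : ℝ) with hbp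
  have h1 : α ^ 2 * n ^ 3 ≤ ∑ y ∈ P, ((Nb y).card : ℝ) ^ 2 := by
    have h2 := sq_sum_le_card_mul_sum_sq (s := P) (f := fun y => ((Nb y).card : ℝ))
    have h3 : (α * n ^ 2) ^ 2 ≤ (∑ y ∈ P, ((Nb y).card : ℝ)) ^ 2 := by
      apply pow_le_pow_left₀ (by positivity) h
    have h4 : n * (α ^ 2 * n ^ 3) ≤ n * ∑ y ∈ P, ((Nb y).card : ℝ) ^ 2 := by
      calc _ = (α * n ^ 2) ^ 2 := by ring
        _ ≤ _ := h3.trans h2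
    exact le_of_mul_le_mul_left h4 hn0
  have h5 : ∑ y ∈ P, bp y ≤ α ^ 2 * n ^ 3 / 16 := by
    simp only [hbp]
    rw [double_count P _ (fun y (q : G × G) => q.1 - y ∈ Z ∧ q.2 - y ∈ Z)]
    calc _ ≤ (((P ×ˢ P).filter (fun q => bad q.1 q.2)).card : ℝ) * (α ^ 2 * n / 16) := by
          rw [← nsmul_eq_mul]
          apply Finset.sum_le_card_nsmul
          intro q hq
          exact (Finset.mem_filter.1 hq).2.le
      _ ≤ (((P ×ˢ P).card : ℕ) : ℝ) * (α ^ 2 * n / 16) := by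
          gcongr
          exact Finset.filter_subset _ _
      _ = _ := by rw [Finset.card_product]; push_cast; rw [← hn]; ring
  obtain ⟨y, hy, hy2⟩ : ∃ y ∈ P, α ^ 2 * n ^ 2 / 2 ≤ ((Nb y).card : ℝ) ^ 2 - 8 * bp y := by
    apply Finset.exists_le_of_sum_le hP
    rw [Finset.sum_const, nsmul_eq_mul, Finset.sum_sub_distrib, ← Finset.mul_sum, ← hn]
    nlinarith
  set X := Nb y with hX
  have hbp0 : 0 ≤ bp y := by simp only [hbp]; positivity
  have hXc : α * n / 2 ≤ (X.card : ℝ) := by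
    apply le_of_sq_le_sq _ (by positivity)
    nlinarith [mul_pos hα hn0, mul_pos (mul_pos hα hn0) (mul_pos hα hn0)]
  have hX0 : (0:ℝ) < X.card := lt_of_lt_of_le (by positivity) hXc
  have hbX : bp y = ∑ x ∈ X, ((X.filter (fun x' => bad x x')).card : ℝ) := by
    have : ((P ×ˢ P).filter (fun q => bad q.1 q.2)).filter
      (fun q => q.1 - y ∈ Z ∧ q.2 - y ∈ Z) = (X ×ˢ X).filter (fun q => bad q.1 q.2) := by
      ext q; simp only [hX, hNb, Finset.mem_filter, Finset.mem_product]; tauto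
    simp only [hbp]
    rw [this, Finset.card_filter, Finset.sum_product]
    simp only [Finset.card_filter]
    push_cast; rfl
  have hbad8 : bp y ≤ (X.card : ℝ) ^ 2 / 8 := by nlinarith [sq_nonneg (α * n)]
  set S := X.filter (fun x => ((X.filter (fun x' => bad x x')).card : ℝ) ≤ X.card / 4) with hS
  have hSX : S ⊆ X := Finset.filter_subset _ _
  have hScard : (X.card : ℝ) / 2 ≤ S.card := by
    have h6 : ((X.filter (fun x => ¬ ((X.filter (fun x' => bad x x')).card : ℝ) ≤ X.card / 4)).card : ℝ)
        * (X.card / 4) ≤ bp y := by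
      rw [hbX, ← nsmul_eq_mul]
      refine (Finset.card_nsmul_le_sum _ (fun x => ((X.filter (fun x' => bad x x')).card : ℝ)) _ ?_).trans ?_
      · intro x hx; exact (not_le.1 (Finset.mem_filter.1 hx).2).le
      · exact Finset.sum_le_sum_of_subset_of_nonneg (Finset.filter_subset _ _) (fun _ _ _ => by positivity)
    have h7 := Finset.card_filter_add_card_filter_not (s := X)
      (fun x => ((X.filter (fun x' => bad x x')).card : ℝ) ≤ X.card / 4)
    have h8 : (S.card : ℝ) + ((X.filter (fun x => ¬ ((X.filter (fun x' => bad x x')).card : ℝ) ≤ X.card / 4)).card : ℝ) = X.card := by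
      exact_mod_cast h7
    by_contra hc
    push Not at hc
    nlinarith
  refine ⟨S, hSX.trans (Finset.filter_subset _ _), by linarith, ?_⟩
  -- representations
  set Z4 := (Z ×ˢ Z) ×ˢ (Z ×ˢ Z) with hZ4
  set W : G → Finset ((G × G) × (G × G)) := fun d =>
    Z4.filter (fun z => z.1.1 - z.1.2 + z.2.1 - z.2.2 = d) with hW
  have key : ∀ d ∈ S - S, α ^ 5 * n ^ 3 / 1024 ≤ ((W d).card : ℝ) := by
    intro d hd
    obtain ⟨x1, hx1, x2, hx2, rfl⟩ := Finset.mem_sub.1 hd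
    set Gd := X.filter (fun x => ¬ bad x1 x ∧ ¬ bad x2 x) with hGd
    have hGc : (X.card : ℝ) / 2 ≤ Gd.card := by
      have e1 := (Finset.mem_filter.1 hx1).2
      have e2 := (Finset.mem_filter.1 hx2).2
      have e3 : X ⊆ Gd ∪ (X.filter (fun x' => bad x1 x') ∪ X.filter (fun x' => bad x2 x')) := by
        intro x hx
        simp only [hGd, Finset.mem_union, Finset.mem_filter]; tauto
      have e4 := (Finset.card_le_card e3).trans (Finset.card_union_le _ _)
      have e5 := Finset.card_union_le (X.filter (fun x' => bad x1 x')) (X.filter (fun x' => bad x2 x'))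
      have e6 : (X.card : ℝ) ≤ Gd.card + ((X.filter (fun x' => bad x1 x')).card + (X.filter (fun x' => bad x2 x')).card) := by
        exact_mod_cast e4.trans (by omega)
      linarith
    set U := Gd.sigma (fun x3 => (P.filter (fun y => x1 - y ∈ Z ∧ x3 - y ∈ Z)) ×ˢ
      (P.filter (fun y => x2 - y ∈ Z ∧ x3 - y ∈ Z))) with hU
    have hUc : (Gd.card : ℝ) * (α ^ 2 * n / 16) ^ 2 ≤ U.card := by
      rw [hU, Finset.card_sigma, ← nsmul_eq_mul]
      push_cast
      apply Finset.card_nsmul_le_sum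
      intro x3 hx3
      have hx3' := (Finset.mem_filter.1 hx3).2
      rw [Finset.card_product, sq]; push_cast
      exact mul_le_mul (not_lt.1 hx3'.1) (not_lt.1 hx3'.2) (by positivity) (by positivity)
    have hUW : U.card ≤ (W (x1 - x2)).card := by
      apply Finset.card_le_card_of_injOn
        (fun u => ((x1 - u.2.1, u.1 - u.2.1), (u.1 - u.2.2, x2 - u.2.2)))
      · rintro ⟨x3, y1, y2⟩ hu
        simp only [hU, Finset.coe_sigma, Finset.mem_coe, Set.mem_sigma_iff, Finset.mem_product, Finset.mem_filter, hW, hZ4] at hu ⊢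
        refine ⟨by tauto, aux_sub4 _ _ _ _ _⟩
      · rintro ⟨x3, y1, y2⟩ _ ⟨x3', y1', y2'⟩ _ he
        simp only [Prod.mk.injEq] at he
        obtain ⟨⟨a, b⟩, c, d⟩ := he
        have a' : y1 = y1' := sub_right_injective a
        have d' : y2 = y2' := sub_right_injective d
        subst a'; subst d'
        have : x3 = x3' := sub_left_injective b
        subst this; rfl
    have hUW' : (U.card : ℝ) ≤ (W (x1 - x2)).card := by exact_mod_cast hUW
    calc _ = (α * n / 2 / 2) * (α ^ 2 * n / 16) ^ 2 := by ring
      _ ≤ (Gd.card : ℝ) * (α ^ 2 * n / 16) ^ 2 := by gcongr; linarith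
      _ ≤ _ := hUc.trans hUW'
  have hsum : ∑ d ∈ S - S, ((W d).card : ℝ) ≤ (Z.card : ℝ) ^ 4 := by
    have e1 : ∑ d ∈ S - S, (W d).card ≤ Z4.card := by
      simp only [hW]
      rw [Finset.sum_card_fiberwise_eq_card_filter]
      exact Finset.card_le_card (Finset.filter_subset _ _)
    have e2 : Z4.card = Z.card ^ 4 := by simp only [hZ4, Finset.card_product]; ring
    rw [e2] at e1
    exact_mod_cast e1
  have hlow := Finset.card_nsmul_le_sum (S - S) (fun d => ((W d).card : ℝ)) _ key
  rw [nsmul_eq_mul] at hlow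
  linarith
end S10

open scoped BigOperators
namespace S10
open scoped Classical Pointwise
open Finset

def dil {F : Type*} [Field F] [DecidableEq F] (a : F) (P : Finset F) : Finset F :=
  P.image (fun x => a * x)

def InR {F : Type*} [Field F] [DecidableEq F] (P : Finset F) (K : ℝ) (a : F) : Prop :=
  ((P - dil a P).card : ℝ) ≤ K * P.card

section
variable {F : Type*} [Field F] [DecidableEq F]

lemma mem_dil {a : F} {P : Finset F} {x : F} : x ∈ dil a P ↔ ∃ y ∈ P, a * y = x := by
  simp [dil]

lemma card_dil {a : F} (ha : a ≠ 0) (P : Finset F) : (dil a P).card = P.card :=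
  Finset.card_image_of_injective _ (mul_right_injective₀ ha)

lemma dil_sub_dil (a b : F) (P : Finset F) : dil a P - dil (a * b) P = dil a (P - dil b P) := by
  ext x
  simp only [Finset.mem_sub, mem_dil]
  constructor
  · rintro ⟨_, ⟨y, hy, rfl⟩, _, ⟨z, hz, rfl⟩, rfl⟩
    exact ⟨y - b * z, ⟨y, hy, b * z, ⟨z, hz, rfl⟩, rfl⟩, by ring⟩
  · rintro ⟨_, ⟨y, hy, _, ⟨z, hz, rfl⟩, rfl⟩, rfl⟩
    exact ⟨a * y, ⟨y, hy, rfl⟩, a * b * z, ⟨z, hz, rfl⟩, by ring⟩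

lemma dil_one (P : Finset F) : dil 1 P = P := by ext x; simp [mem_dil]

lemma card_sub_comm' (A B : Finset F) : (A - B).card = (B - A).card := by
  rw [← Finset.card_neg (A - B), neg_sub]

lemma InR.mono {P : Finset F} {K L : ℝ} {a : F} (h : InR P K a) (hKL : K ≤ L) : InR P L a :=
  h.trans (by gcongr)

lemma inR_zero {P : Finset F} {K : ℝ} (hK : 1 ≤ K) (hP : P.Nonempty) : InR P K 0 := by
  unfold InR
  have : dil (0:F) P = {0} := by
    ext x; simp only [mem_dil, zero_mul, Finset.mem_singleton]
    constructor
    · rintro ⟨_, _, h⟩; exact h.symm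
    · rintro rfl; exact ⟨_, hP.choose_spec, rfl⟩
  rw [this]
  simp only [Finset.sub_singleton, sub_zero, Finset.image_id']
  nlinarith [(Nat.cast_nonneg P.card : (0:ℝ) ≤ P.card)]

lemma inR_mul {P : Finset F} {K L : ℝ} {a b : F} (hK : 1 ≤ K) (hL : 1 ≤ L) (hP : P.Nonempty)
    (ha : InR P K a) (hb : InR P L b) : InR P (K * L) (a * b) := by
  by_cases h0 : a = 0
  · subst h0; rw [zero_mul]; exact inR_zero (by nlinarith) hP
  have h := Finset.ruzsa_triangle_inequality_sub_sub_sub P (dil a P) (dil (a * b) P)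
  rw [card_dil h0, card_sub_comm' (dil (a*b) P), dil_sub_dil, card_dil h0] at h
  have hP0 : (0:ℝ) < P.card := by exact_mod_cast hP.card_pos
  have h' : ((P - dil (a * b) P).card : ℝ) * P.card ≤ (P - dil a P).card * (P - dil b P).card := by
    exact_mod_cast h
  unfold InR at *
  apply le_of_mul_le_mul_right _ hP0
  calc _ ≤ _ := h'
    _ ≤ (K * P.card) * (L * P.card) := by gcongr
    _ = _ := by ring

lemma inR_inv {P : Finset F} {K : ℝ} {a : F} (ha : InR P K a) : InR P K a⁻¹ := by
  by_cases h0 : a = 0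
  · subst h0; simpa using ha
  unfold InR at *
  have h := dil_sub_dil a a⁻¹ P
  rw [mul_inv_cancel₀ h0, dil_one] at h
  rw [← card_dil h0 (P - dil a⁻¹ P), ← h, card_sub_comm']
  exact ha

lemma inR_aux {P : Finset F} {K : ℝ} {a b : F} (hP : P.Nonempty) (h1 : InR P K 1)
    (ha : InR P K a) (hb : InR P K b) : ∃ U : Finset F, P ⊆ U ∧ dil a P ⊆ U ∧ dil b P ⊆ U ∧
      ∀ m n : ℕ, ((m • U - n • U).card : ℝ) ≤ (3 * K) ^ (m + n) * P.card := by
  refine ⟨P ∪ dil a P ∪ dil b P, by intro x; simp +contextual, by intro x; simp +contextual,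
    by intro x; simp +contextual, ?_⟩
  intro m n
  set U := P ∪ dil a P ∪ dil b P
  have hP0 : (0:ℝ) < P.card := by exact_mod_cast hP.card_pos
  have h := Finset.pluennecke_ruzsa_inequality_nsmul_sub_nsmul_sub hP U m n
  have h' : ((m • U - n • U).card : ℝ) ≤ ((P - U).card / P.card) ^ (m + n) * P.card := by
    have h3 := (NNRat.cast_le (K := ℝ)).2 h
    push_cast at h3
    exact h3
  refine h'.trans ?_
  gcongr
  rw [div_le_iff₀ hP0]
  have hU : P - U = (P - P) ∪ (P - dil a P) ∪ (P - dil b P) := by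
    simp only [U, Finset.sub_union]
  have c1 := (Finset.card_union_le ((P - P) ∪ (P - dil a P)) (P - dil b P))
  have c2 := (Finset.card_union_le (P - P) (P - dil a P))
  have c3 : ((P - U).card : ℝ) ≤ (P - P).card + (P - dil a P).card + (P - dil b P).card := by
    rw [hU]; exact_mod_cast c1.trans (by omega)
  unfold InR at *
  rw [dil_one] at h1
  linarith

lemma inR_add {P : Finset F} {K : ℝ} {a b : F} (hK : 27 ≤ K) (hP : P.Nonempty) (h1 : InR P K 1)
    (ha : InR P K a) (hb : InR P K b) : InR P (K ^ 4) (a + b) := by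
  obtain ⟨U, h2, h3, h4, h5⟩ := inR_aux hP h1 ha hb
  have h6 : P - dil (a + b) P ⊆ 1 • U - 2 • U := by
    intro x hx
    obtain ⟨y, hy, z, hz, rfl⟩ := Finset.mem_sub.1 hx
    obtain ⟨w, hw, rfl⟩ := mem_dil.1 hz
    rw [one_nsmul, two_nsmul]
    refine Finset.sub_mem_sub (h2 hy) ?_
    rw [add_mul]
    exact Finset.add_mem_add (h3 (mem_dil.2 ⟨w, hw, rfl⟩)) (h4 (mem_dil.2 ⟨w, hw, rfl⟩))
  have h7 : ((P - dil (a + b) P).card : ℝ) ≤ ((1 • U - 2 • U).card : ℝ) := by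
    exact_mod_cast Finset.card_le_card h6
  refine (h7.trans (h5 1 2)).trans ?_
  gcongr
  calc (3 * K) ^ (1 + 2) = 27 * K ^ 3 := by ring
    _ ≤ K * K ^ 3 := by gcongr
    _ = _ := by ring

lemma inR_sub {P : Finset F} {K : ℝ} {a b : F} (hK : 27 ≤ K) (hP : P.Nonempty) (h1 : InR P K 1)
    (ha : InR P K a) (hb : InR P K b) : InR P (K ^ 4) (a - b) := by
  obtain ⟨U, h2, h3, h4, h5⟩ := inR_aux hP h1 ha hb
  have h6 : P - dil (a - b) P ⊆ 2 • U - 1 • U := by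
    intro x hx
    obtain ⟨y, hy, z, hz, rfl⟩ := Finset.mem_sub.1 hx
    obtain ⟨w, hw, rfl⟩ := mem_dil.1 hz
    rw [one_nsmul, two_nsmul]
    have : y - (a - b) * w = (y + b * w) - a * w := by ring
    rw [this]
    exact Finset.sub_mem_sub (Finset.add_mem_add (h2 hy) (h4 (mem_dil.2 ⟨w, hw, rfl⟩)))
      (h3 (mem_dil.2 ⟨w, hw, rfl⟩))
  have h7 : ((P - dil (a - b) P).card : ℝ) ≤ ((2 • U - 1 • U).card : ℝ) := by
    exact_mod_cast Finset.card_le_card h6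
  refine (h7.trans (h5 2 1)).trans ?_
  gcongr
  calc (3 * K) ^ (2 + 1) = 27 * K ^ 3 := by ring
    _ ≤ K * K ^ 3 := by gcongr
    _ = _ := by ring

lemma energy_cs {ι α : Type*} [DecidableEq α] (X : Finset ι) (f : ι → α) :
    (X.card : ℝ) ^ 2 ≤ (X.image f).card * ((X ×ˢ X).filter (fun q => f q.1 = f q.2)).card := by
  have h := cs_count X (X.image f) (fun u x => f u = x)
  have e1 : ∑ i ∈ X, (((X.image f).filter (fun x => f i = x)).card : ℝ) = X.card := by
    rw [Finset.card_eq_sum_ones]; push_cast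
    refine Finset.sum_congr rfl fun i hi => ?_
    rw [Finset.filter_eq, if_pos (Finset.mem_image_of_mem f hi)]; simp
  have e2 : ∑ i ∈ X, ∑ j ∈ X, (((X.image f).filter (fun x => f i = x ∧ f j = x)).card : ℝ)
      ≤ ((X ×ˢ X).filter (fun q => f q.1 = f q.2)).card := by
    rw [Finset.card_filter, Finset.sum_product]; push_cast
    refine Finset.sum_le_sum fun i _ => Finset.sum_le_sum fun j _ => ?_
    split_ifs with hij
    · have : ((X.image f).filter (fun x => f i = x ∧ f j = x)).card ≤ 1 := by
        apply Finset.card_le_one.2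
        intro a ha b hb
        rw [← (Finset.mem_filter.1 ha).2.1, ← (Finset.mem_filter.1 hb).2.1]
      exact_mod_cast this
    · have : (X.image f).filter (fun x => f i = x ∧ f j = x) = ∅ := by
        apply Finset.filter_false_of_mem
        rintro x _ ⟨h1, h2⟩
        exact hij (h1.trans h2.symm)
      simp [this]
  rw [e1] at h
  exact h.trans (by gcongr)

lemma card_inR [Fintype F] (P : Finset F) (K : ℝ) (hK : 1 ≤ K) (hP : 2 * K ≤ P.card) :
    ((Finset.univ.filter (fun a : F => InR P K a)).card : ℝ) ≤ 2 * K * P.card := by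
  set R := Finset.univ.filter (fun a : F => InR P K a) with hR
  set n : ℝ := (P.card : ℝ) with hn
  have hn0 : 0 < n := by linarith
  set Q4 := (P ×ˢ P) ×ˢ (P ×ˢ P) with hQ4
  have hE : ∀ a ∈ R, n ^ 3 ≤ K * ((Q4.filter (fun q => q.1.1 - a * q.1.2 = q.2.1 - a * q.2.2)).card : ℝ) := by
    intro a ha
    have haR : InR P K a := (Finset.mem_filter.1 ha).2
    have h := energy_cs (P ×ˢ P) (fun q : F × F => q.1 - a * q.2)
    have him : (P ×ˢ P).image (fun q : F × F => q.1 - a * q.2) = P - dil a P := by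
      ext x; simp only [Finset.mem_image, Finset.mem_product, Finset.mem_sub, mem_dil, Prod.exists]
      constructor
      · rintro ⟨u, v, ⟨hu, hv⟩, rfl⟩; exact ⟨u, hu, _, ⟨v, hv, rfl⟩, rfl⟩
      · rintro ⟨u, hu, _, ⟨v, hv, rfl⟩, rfl⟩; exact ⟨u, v, ⟨hu, hv⟩, rfl⟩
    rw [him, Finset.card_product] at h
    push_cast at h
    rw [← hn] at h
    have h2 : n * n ^ 3 ≤ n * (K * ((Q4.filter (fun q => q.1.1 - a * q.1.2 = q.2.1 - a * q.2.2)).card : ℝ)) := by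
      calc _ = (n * n) ^ 2 := by ring
        _ ≤ _ := h
        _ ≤ (K * n) * _ := by gcongr; exact haR
        _ = _ := by ring
    exact le_of_mul_le_mul_left h2 hn0
  have hup : ∑ a ∈ R, ((Q4.filter (fun q => q.1.1 - a * q.1.2 = q.2.1 - a * q.2.2)).card : ℝ)
      ≤ n ^ 4 + R.card * n ^ 2 := by
    have hsplit : ∀ a ∈ R, ((Q4.filter (fun q => q.1.1 - a * q.1.2 = q.2.1 - a * q.2.2)).card : ℝ)
        ≤ ((Q4.filter (fun q => q.1.2 ≠ q.2.2 ∧ q.1.1 - a * q.1.2 = q.2.1 - a * q.2.2)).card : ℝ) + n ^ 2 := by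
      intro a _
      have c1 : Q4.filter (fun q => q.1.1 - a * q.1.2 = q.2.1 - a * q.2.2) ⊆
        Q4.filter (fun q => q.1.2 ≠ q.2.2 ∧ q.1.1 - a * q.1.2 = q.2.1 - a * q.2.2) ∪
        (P ×ˢ P).image (fun u => (u, u)) := by
        rintro ⟨⟨u, v⟩, ⟨w, z⟩⟩ hq
        simp only [Finset.mem_filter, Finset.mem_union, Finset.mem_image, hQ4, Finset.mem_product] at hq ⊢
        by_cases hvz : v = z
        · right
          subst hvz
          have : u = w := by simpa using hq.2
          subst this
          exact ⟨(u, v), hq.1.1, rfl⟩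
        · left; exact ⟨hq.1, hvz, hq.2⟩
      have c2 := (Finset.card_le_card c1).trans (Finset.card_union_le _ _)
      have c3 : ((P ×ˢ P).image (fun u => (u, u))).card ≤ P.card * P.card := by
        rw [← Finset.card_product]; exact Finset.card_image_le
      have c4 := c2.trans (Nat.add_le_add_left c3 _)
      have c5 : ((Q4.filter (fun q => q.1.1 - a * q.1.2 = q.2.1 - a * q.2.2)).card : ℝ) ≤
        ((Q4.filter (fun q => q.1.2 ≠ q.2.2 ∧ q.1.1 - a * q.1.2 = q.2.1 - a * q.2.2)).card : ℝ) + P.card * P.card := by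
        exact_mod_cast c4
      rw [sq]; exact c5
    refine (Finset.sum_le_sum hsplit).trans ?_
    rw [Finset.sum_add_distrib, Finset.sum_const, nsmul_eq_mul]
    gcongr
    rw [double_count R Q4 (fun a q => q.1.2 ≠ q.2.2 ∧ q.1.1 - a * q.1.2 = q.2.1 - a * q.2.2)]
    calc _ ≤ ∑ q ∈ Q4, (1:ℝ) := by
          refine Finset.sum_le_sum fun q _ => ?_
          have : (R.filter (fun a => q.1.2 ≠ q.2.2 ∧ q.1.1 - a * q.1.2 = q.2.1 - a * q.2.2)).card ≤ 1 := by
            apply Finset.card_le_one.2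
            intro a ha b hb
            have ha := (Finset.mem_filter.1 ha).2
            have hb := (Finset.mem_filter.1 hb).2
            apply mul_right_cancel₀ (sub_ne_zero.2 ha.1)
            linear_combination hb.2 - ha.2
          exact_mod_cast this
      _ = n ^ 4 := by
          simp only [hQ4, Finset.sum_const, Finset.card_product, nsmul_eq_mul]; push_cast; rw [← hn]; ring
  have hlow := Finset.sum_le_sum hE
  rw [← Finset.mul_sum, Finset.sum_const, nsmul_eq_mul] at hlow
  have h3 : (R.card : ℝ) * n ^ 3 ≤ K * (n ^ 4 + R.card * n ^ 2) := hlow.trans (by gcongr)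
  have hR0 : (0:ℝ) ≤ R.card := by positivity
  have h4 : n ^ 3 * (R.card : ℝ) ≤ n ^ 3 * (2 * K * n) := by
    have : K * (R.card * n ^ 2) ≤ (n / 2) * (R.card * n ^ 2) := by gcongr; linarith
    nlinarith
  exact le_of_mul_le_mul_left h4 (by positivity)
end

lemma pivot {p : ℕ} [Fact p.Prime] (P : Finset (ZMod p)) (K : ℝ) (hK : 27 ≤ K) (hP : P.Nonempty)
    (h1 : InR P K 1) (Q : Finset (ZMod p)) (hQ2 : 2 ≤ Q.card) (hQ : ∀ q ∈ Q, InR P K q)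
    (hcard : (Finset.univ.filter (fun a : ZMod p => InR P (K ^ 132) a)).card < p) :
    ∃ Q' : Finset (ZMod p), Q'.card = Q.card ^ 2 ∧ ∀ q ∈ Q', InR P (K ^ 132) q := by
  have hK1 : (1:ℝ) ≤ K := by linarith
  have hm : ∀ {a b : ℕ}, a ≤ b → K ^ a ≤ K ^ b := fun h => pow_le_pow_right₀ hK1 h
  have hge : ∀ {a : ℕ}, a ≠ 0 → 27 ≤ K ^ a := fun h => hK.trans (le_self_pow₀ hK1 h)
  have hge1 : ∀ {a : ℕ}, 1 ≤ K ^ a := fun {a} => one_le_pow₀ hK1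
  set isD : ZMod p → Prop := fun ξ => ∃ a ∈ Q, ∃ b ∈ Q, ∃ c ∈ Q, ∃ d ∈ Q, c ≠ d ∧ ξ * (c - d) = a - b with hD
  have hDR : ∀ ξ, isD ξ → InR P (K ^ 8) ξ := by
    rintro ξ ⟨a, ha, b, hb, c, hc, d, hd, hcd, h⟩
    have e : ξ = (a - b) * (c - d)⁻¹ := by
      rw [← h, mul_assoc, mul_inv_cancel₀ (sub_ne_zero.2 hcd), mul_one]
    rw [e]
    have := inR_mul hge1 hge1 hP (inR_sub hK hP h1 (hQ a ha) (hQ b hb))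
      (inR_inv (inR_sub hK hP h1 (hQ c hc) (hQ d hd)))
    exact this.mono (by rw [← pow_add])
  have h0 : isD 0 := by
    obtain ⟨a, ha, b, hb, hab⟩ := Finset.one_lt_card.1 (by omega : 1 < Q.card)
    exact ⟨a, ha, a, ha, a, ha, b, hb, hab, by simp⟩
  obtain ⟨ξ, hξ, hξ1⟩ : ∃ ξ, isD ξ ∧ ¬ isD (ξ + 1) := by
    by_contra hc
    push Not at hc
    have hall : ∀ n : ℕ, isD (n : ZMod p) := by
      intro n
      induction n with
      | zero => simpa using h0
      | succ n ih => simpa using hc _ ih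
    have : (Finset.univ.filter (fun a : ZMod p => InR P (K ^ 132) a)) = Finset.univ := by
      apply Finset.filter_true_of_mem
      intro x _
      have := hall x.val
      rw [ZMod.natCast_zmod_val] at this
      exact (hDR x this).mono (hm (by norm_num))
    rw [this, Finset.card_univ, ZMod.card] at hcard
    exact lt_irrefl _ hcard
  refine ⟨(Q ×ˢ Q).image (fun e => e.1 + (ξ + 1) * e.2), ?_, ?_⟩
  · rw [Finset.card_image_of_injOn, Finset.card_product, sq]
    rintro ⟨a, b⟩ hab ⟨c, d⟩ hcd he
    simp only [Finset.coe_product, Set.mem_prod, Finset.mem_coe] at hab hcd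
    simp only at he
    by_cases hbd : b = d
    · subst hbd
      have : a = c := by simpa using he
      rw [this]
    · exfalso
      exact hξ1 ⟨c, hcd.1, a, hab.1, b, hab.2, d, hcd.2, hbd, by linear_combination he⟩
  · intro q hq
    obtain ⟨⟨a, b⟩, hab, rfl⟩ := Finset.mem_image.1 hq
    rw [Finset.mem_product] at hab
    have s1 : InR P ((K ^ 8) ^ 4) (ξ + 1) :=
      inR_add (hge (by norm_num)) hP (h1.mono (le_self_pow₀ hK1 (by norm_num))) (hDR ξ hξ)
        (h1.mono (le_self_pow₀ hK1 (by norm_num)))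
    have s2 : InR P (K ^ 33) ((ξ + 1) * b) :=
      (inR_mul (one_le_pow₀ hge1) hK1 hP s1 (hQ b hab.2)).mono (by rw [← pow_mul, ← pow_succ])
    have s3 := inR_add (hge (by norm_num)) hP (h1.mono (le_self_pow₀ hK1 (by norm_num)))
      ((hQ a hab.1).mono (le_self_pow₀ hK1 (by norm_num : 33 ≠ 0))) s2
    exact s3.mono (by rw [← pow_mul])
end S10

open scoped BigOperators
namespace S10
open scoped Classical Pointwise
open Finset

def rep {F : Type*} [Add F] [DecidableEq F] (B : Finset F) (μ : F) : ℕ :=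
  (B.filter (fun x => x + μ ∈ B)).card

noncomputable def pop {F : Type*} [Add F] [DecidableEq F] [Fintype F] (B : Finset F) (t : ℝ) : Finset F :=
  Finset.univ.filter (fun μ => t ≤ (rep B μ : ℝ))

noncomputable def mpop {F : Type*} [Mul F] [DecidableEq F] [Fintype F] (B : Finset F) (t : ℝ) : Finset F :=
  Finset.univ.filter (fun q => t ≤ ((B.filter (fun x => q * x ∈ B)).card : ℝ))

section
variable {F : Type*} [Field F] [DecidableEq F] [Fintype F]

lemma mem_pop {B : Finset F} {t : ℝ} {μ : F} : μ ∈ pop B t ↔ t ≤ (rep B μ : ℝ) := by simp [pop]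

lemma rep_le (B : Finset F) (μ : F) : (rep B μ : ℝ) ≤ B.card := by
  exact_mod_cast Finset.card_le_card (Finset.filter_subset _ _)

lemma rep_sub_ge (B : Finset F) (a b : F) :
    ((B.filter (fun x => x + a ∈ B ∧ x + b ∈ B)).card : ℝ) ≤ rep B (a - b) := by
  have : (B.filter (fun x => x + a ∈ B ∧ x + b ∈ B)).card ≤ rep B (a - b) := by
    apply Finset.card_le_card_of_injOn (fun x => x + b)
    · intro x hx
      have hx := (Finset.mem_filter.1 hx).2
      refine Finset.mem_coe.2 (Finset.mem_filter.2 ⟨hx.2, ?_⟩)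
      have : x + b + (a - b) = x + a := by ring
      rw [this]; exact hx.1
    · intro x _ y _ h; exact add_left_injective b h
  exact_mod_cast this

lemma sum_rep (B : Finset F) : ∑ μ : F, (rep B μ : ℝ) = (B.card : ℝ) ^ 2 := by
  unfold rep
  rw [double_count Finset.univ B (fun μ x => x + μ ∈ B)]
  have : ∀ x ∈ B, ((Finset.univ.filter (fun μ => x + μ ∈ B)).card : ℝ) = B.card := by
    intro x _
    congr 1
    apply Finset.card_nbij' (fun μ => x + μ) (fun z => z - x)
    · intro μ; simp
    · intro z; simp
    · intro μ; simp
    · intro z; simp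
  rw [Finset.sum_congr rfl this, Finset.sum_const, nsmul_eq_mul, sq]

lemma pop_card_le (B : Finset F) (t : ℝ) : (pop B t).card * t ≤ (B.card : ℝ) ^ 2 := by
  rw [← sum_rep B, ← nsmul_eq_mul]
  refine (Finset.card_nsmul_le_sum (pop B t) (fun μ => (rep B μ : ℝ)) t (fun μ h => mem_pop.1 h)).trans ?_
  exact Finset.sum_le_sum_of_subset_of_nonneg (Finset.subset_univ _) (fun _ _ _ => by positivity)

/-- abstract correlation lemma -/
lemma corr {ι : Type*} (I : Finset ι) (a : ι → F) (B : Finset F) (hB : B.Nonempty) (κ : ℝ) (hκ : 0 ≤ κ)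
    (h : κ * B.card * I.card ≤ ∑ i ∈ I, (rep B (a i) : ℝ)) :
    κ ^ 2 * B.card * (I.card : ℝ) ^ 2 ≤ ∑ i ∈ I, ∑ j ∈ I, (rep B (a i - a j) : ℝ) := by
  have hB0 : (0:ℝ) < B.card := by exact_mod_cast hB.card_pos
  have h1 := cs_count I B (fun i x => x + a i ∈ B)
  have h2 : (κ * B.card * I.card) ^ 2 ≤ (∑ i ∈ I, (rep B (a i) : ℝ)) ^ 2 :=
    pow_le_pow_left₀ (by positivity) h 2
  have h3 : ∑ i ∈ I, ∑ j ∈ I, ((B.filter (fun x => x + a i ∈ B ∧ x + a j ∈ B)).card : ℝ)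
      ≤ ∑ i ∈ I, ∑ j ∈ I, (rep B (a i - a j) : ℝ) :=
    Finset.sum_le_sum fun i _ => Finset.sum_le_sum fun j _ => rep_sub_ge _ _ _
  apply le_of_mul_le_mul_left _ hB0
  calc _ = (κ * B.card * I.card) ^ 2 := by ring
    _ ≤ _ := h2
    _ ≤ _ := h1
    _ ≤ _ := by gcongr

lemma step1 (B : Finset F) (hB : B.Nonempty) (y T : ℝ) (hy : 2 ≤ y) (hyT : y ^ 530 ≤ T)
    (hne : (pop B (B.card / y)).Nonempty)
    (h2 : ((pop B (B.card / y ^ 530)).card : ℝ) ≤ T * (pop B (B.card / y)).card) :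
    ∃ P ⊆ pop B (B.card / y), ((pop B (B.card / y)).card : ℝ) ≤ T * P.card ∧
      ((P - P).card : ℝ) ≤ T ^ 11 * P.card := by
  set N : ℝ := (B.card : ℝ) with hN
  set P0 := pop B (N / y) with hP0
  set Z := pop B (N / y ^ 530) with hZ
  have hN0 : 0 < N := by rw [hN]; exact_mod_cast hB.card_pos
  have hy0 : 0 < y := by linarith
  have hy1 : 1 ≤ y := by linarith
  have hT1 : 1 ≤ T := (one_le_pow₀ hy1).trans hyT
  set n : ℝ := (P0.card : ℝ) with hn
  have hn0 : 0 < n := by rw [hn]; exact_mod_cast hne.card_pos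
  have c1 := corr P0 (fun a => a) B hB (1 / y) (by positivity) (by
    rw [← hN, ← hn]
    have := Finset.card_nsmul_le_sum P0 (fun μ => (rep B μ : ℝ)) (N / y) (fun μ h => mem_pop.1 h)
    rw [nsmul_eq_mul] at this
    calc _ = n * (N / y) := by ring
      _ ≤ _ := this)
  rw [← Finset.sum_product'] at c1
  have c2 := popular_count (P0 ×ˢ P0) (fun q => (rep B (q.1 - q.2) : ℝ)) N (N / (2 * y ^ 2))
    (fun q _ => rep_le B _) (by
      refine le_trans (le_of_eq ?_) c1
      rw [Finset.card_product]; push_cast; rw [← hn]; field_simp; rfl) (by positivity)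
  have c3 : (1 / (2 * y ^ 2)) * n ^ 2 ≤ ∑ y ∈ P0, ((P0.filter (fun x => x - y ∈ Z)).card : ℝ) := by
    have d1 : (1 / (2 * y ^ 2)) * n ^ 2 ≤
      (((P0 ×ˢ P0).filter (fun q => N / (2 * y ^ 2) ≤ (rep B (q.1 - q.2) : ℝ))).card : ℝ) := by
      apply le_of_mul_le_mul_left _ hN0
      refine le_trans (le_of_eq ?_) c2
      rw [Finset.card_product]; push_cast; rw [← hn]; field_simp
    refine d1.trans ?_
    have d2 : ∑ y ∈ P0, ((P0.filter (fun x => x - y ∈ Z)).card : ℝ)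
       = (((P0 ×ˢ P0).filter (fun q => q.1 - q.2 ∈ Z)).card : ℝ) := by
      rw [Finset.card_filter, Finset.sum_product_right]
      simp only [Finset.card_filter]; push_cast; rfl
    rw [d2]
    norm_cast
    apply Finset.card_le_card
    apply Finset.monotone_filter_right
    intro q _ hq
    rw [hZ]
    refine mem_pop.2 (le_trans ?_ hq)
    have : 2 * y ^ 2 ≤ y ^ 530 := by
      calc 2 * y ^ 2 ≤ y * y ^ 2 := by gcongr
        _ = y ^ 3 := by ring
        _ ≤ y ^ 530 := pow_le_pow_right₀ hy1 (by norm_num)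
    gcongr
  obtain ⟨S, hS, hS1, hS2⟩ := bsg P0 Z (1 / (2 * y ^ 2)) (by positivity) hne c3
  rw [← hn] at hS1 hS2
  set β := 2 * y ^ 2 with hβ
  have hβ0 : 0 < β := by positivity
  have hβy : β ≤ y ^ 3 := by rw [hβ]; nlinarith [sq_nonneg y]
  have hβT : β ≤ T := hβy.trans ((pow_le_pow_right₀ hy1 (by norm_num)).trans hyT)
  have h4T : 4096 ≤ T := by
    calc (4096:ℝ) = 2 ^ 12 := by norm_num
      _ ≤ y ^ 12 := by gcongr
      _ ≤ _ := (pow_le_pow_right₀ hy1 (by norm_num)).trans hyT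
  have h4β : 4 * β ≤ T := by
    calc 4 * β ≤ y ^ 2 * y ^ 3 := by gcongr; nlinarith
      _ = y ^ 5 := by ring
      _ ≤ _ := (pow_le_pow_right₀ hy1 (by norm_num)).trans hyT
  have hnS : n ≤ 4 * β * S.card := by
    have : 1 / β * n / 4 = n / (4 * β) := by field_simp
    rw [this, div_le_iff₀ (by positivity)] at hS1
    linarith
  refine ⟨S, hS, hnS.trans (by gcongr), ?_⟩
  have e1 : ((S - S).card : ℝ) * ((1 / β) ^ 5 * n ^ 3) ≤ 1024 * (T * n) ^ 4 :=
    hS2.trans (by gcongr)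
  have e2 : ((S - S).card : ℝ) ≤ 1024 * T ^ 4 * β ^ 5 * n := by
    have : ((S - S).card : ℝ) * ((1 / β) ^ 5 * n ^ 3) = ((S - S).card : ℝ) * n ^ 3 / β ^ 5 := by field_simp
    rw [this, div_le_iff₀ (by positivity)] at e1
    have : n ^ 3 * ((S - S).card : ℝ) ≤ n ^ 3 * (1024 * T ^ 4 * β ^ 5 * n) := by linarith
    exact le_of_mul_le_mul_left this (by positivity)
  calc _ ≤ _ := e2
    _ ≤ 1024 * T ^ 4 * β ^ 5 * (4 * β * S.card) := by gcongr
    _ = 4096 * T ^ 4 * β ^ 6 * S.card := by ring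
    _ ≤ T * T ^ 4 * T ^ 6 * S.card := by gcongr
    _ = _ := by ring

lemma step2 (B : Finset F) (hB0 : (0:F) ∉ B) (hB : B.Nonempty) (y : ℝ) (hy : 2 ≤ y)
    (P : Finset F) (hPne : P.Nonempty) (hP : P ⊆ pop B (B.card / y)) :
    ∃ D ⊆ B, (B.card : ℝ) / y ^ 2 ≤ D.card ∧ ∀ q ∈ mpop D (B.card / y ^ 130), q ≠ 0 ∧
      1 / y ^ 264 * B.card * (P ×ˢ P).card ≤ ∑ b ∈ P ×ˢ P, (rep B (q⁻¹ * (b.1 - b.2)) : ℝ) := by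
  set N : ℝ := (B.card : ℝ) with hN
  have hN0 : 0 < N := by rw [hN]; exact_mod_cast hB.card_pos
  have hy0 : 0 < y := by linarith
  have hy1 : 1 ≤ y := by linarith
  set n : ℝ := (P.card : ℝ) with hn
  have hn0 : 0 < n := by rw [hn]; exact_mod_cast hPne.card_pos
  set f : F → ℝ := fun x => ((P.filter (fun b => x + b ∈ B)).card : ℝ) with hf
  have s1 : n * (N / y) ≤ ∑ x ∈ B, f x := by
    simp only [hf]
    rw [← double_count P B (fun b x => x + b ∈ B), ← nsmul_eq_mul]
    exact Finset.card_nsmul_le_sum P (fun μ => (rep B μ : ℝ)) (N / y) (fun μ h => mem_pop.1 (hP h))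
  set D := B.filter (fun x => n / (2 * y) ≤ f x) with hD
  have s2 := popular_count B f n (n / (2 * y)) (by
    intro x _; simp only [hf, hn]; exact_mod_cast Finset.card_le_card (Finset.filter_subset _ _)) (by
      refine le_trans (le_of_eq ?_) s1
      rw [← hN]; field_simp) (by positivity)
  have s3 : N / (2 * y) ≤ D.card := by
    apply le_of_mul_le_mul_left _ hn0
    refine le_trans (le_of_eq ?_) s2
    rw [← hN]; ring
  refine ⟨D, Finset.filter_subset _ _, le_trans ?_ s3, ?_⟩
  · have : 2 * y ≤ y ^ 2 := by nlinarith
    gcongr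
  intro q hq
  have hq : N / y ^ 130 ≤ ((D.filter (fun x => q * x ∈ D)).card : ℝ) := by
    simpa [mpop] using hq
  have hq0 : q ≠ 0 := by
    rintro rfl
    have : D.filter (fun x => 0 * x ∈ D) = ∅ := by
      apply Finset.filter_false_of_mem
      intro x _ h
      rw [zero_mul] at h
      exact hB0 (Finset.filter_subset _ _ h)
    rw [this] at hq
    have : 0 < N / y ^ 130 := by positivity
    simp at hq; linarith
  refine ⟨hq0, ?_⟩
  -- count of (x,b) with qx + b ∈ B
  have s4 : N / y ^ 130 * (n / (2 * y)) ≤ ∑ x ∈ B, f (q * x) := by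
    calc _ ≤ ((D.filter (fun x => q * x ∈ D)).card : ℝ) * (n / (2 * y)) := by gcongr
      _ ≤ ∑ x ∈ D.filter (fun x => q * x ∈ D), f (q * x) := by
        rw [← nsmul_eq_mul]
        apply Finset.card_nsmul_le_sum
        intro x hx
        exact (Finset.mem_filter.1 (Finset.mem_filter.1 hx).2).2
      _ ≤ _ := by
        apply Finset.sum_le_sum_of_subset_of_nonneg
        · exact (Finset.filter_subset _ _).trans (Finset.filter_subset _ _)
        · intro x _ _; simp only [hf]; positivity
  have s5 : ∑ x ∈ B, f (q * x) = ∑ b ∈ P, ((B.filter (fun w => q⁻¹ * (w - b) ∈ B)).card : ℝ) := by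
    simp only [hf]
    rw [← double_count P B (fun b x => q * x + b ∈ B)]
    refine Finset.sum_congr rfl fun b _ => ?_
    congr 1
    apply Finset.card_nbij' (fun x => q * x + b) (fun w => q⁻¹ * (w - b))
    · intro x hx
      have hx := Finset.mem_filter.1 hx
      refine Finset.mem_coe.2 (Finset.mem_filter.2 ⟨hx.2, ?_⟩)
      have : q⁻¹ * (q * x + b - b) = x := by field_simp; ring
      rw [this]; exact hx.1
    · intro w hw
      have hw := Finset.mem_filter.1 hw
      refine Finset.mem_coe.2 (Finset.mem_filter.2 ⟨hw.2, ?_⟩)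
      have : q * (q⁻¹ * (w - b)) + b = w := by field_simp; ring
      rw [this]; exact hw.1
    · intro x _; simp only; field_simp; ring
    · intro w _; simp only; field_simp; ring
  have s6 := cs_count P B (fun b w => q⁻¹ * (w - b) ∈ B)
  rw [← s5] at s6
  have s7 : n * N / y ^ 132 ≤ ∑ x ∈ B, f (q * x) := by
    refine le_trans ?_ s4
    have : N / y ^ 130 * (n / (2 * y)) = n * N / (2 * y ^ 131) := by field_simp
    rw [this]
    have : 2 * y ^ 131 ≤ y ^ 132 := by
      calc 2 * y ^ 131 ≤ y * y ^ 131 := by gcongr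
        _ = _ := by ring
    gcongr
  have s8 := (pow_le_pow_left₀ (by positivity) s7 2).trans s6
  have s9 : n ^ 2 * N / y ^ 264 ≤ ∑ i ∈ P, ∑ j ∈ P, ((B.filter (fun w => q⁻¹ * (w - i) ∈ B ∧ q⁻¹ * (w - j) ∈ B)).card : ℝ) := by
    apply le_of_mul_le_mul_left _ hN0
    refine le_trans (le_of_eq ?_) s8
    field_simp
  rw [Finset.card_product, Finset.sum_product]
  push_cast
  rw [← hn]
  calc _ = n ^ 2 * N / y ^ 264 := by ring
    _ ≤ _ := s9
    _ ≤ _ := by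
      refine Finset.sum_le_sum fun i _ => Finset.sum_le_sum fun j _ => ?_
      have : (B.filter (fun w => q⁻¹ * (w - i) ∈ B ∧ q⁻¹ * (w - j) ∈ B)).card ≤ rep B (q⁻¹ * (i - j)) := by
        apply Finset.card_le_card_of_injOn (fun w => q⁻¹ * (w - i))
        · intro w hw
          have hw := (Finset.mem_filter.1 hw).2
          refine Finset.mem_coe.2 (Finset.mem_filter.2 ⟨hw.1, ?_⟩)
          have : q⁻¹ * (w - i) + q⁻¹ * (i - j) = q⁻¹ * (w - j) := by ring
          rw [this]; exact hw.2
        · intro w _ w' _ h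
          exact sub_left_injective (mul_right_injective₀ (inv_ne_zero hq0) h)
      exact_mod_cast this
end
end S10

open scoped BigOperators
namespace S10
open scoped Classical Pointwise
open Finset
section
variable {F : Type*} [Field F] [DecidableEq F] [Fintype F]

set_option maxHeartbeats 2000000 in
lemma fiberR (P Z : Finset F) (hP : P.Nonempty) (T : ℝ) (hT : 1 ≤ T) (q q' : F) (hq : q ≠ 0) (hq' : q' ≠ 0)
    (hZ : (Z.card : ℝ) ≤ T ^ 2 * P.card) (hPP : ((P - P).card : ℝ) ≤ T ^ 11 * P.card)
    (h : (P.card : ℝ) ^ 4 / T ≤ (((P ×ˢ P) ×ˢ (P ×ˢ P)).filter (fun w =>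
      q⁻¹ * (w.1.1 - w.1.2) - q'⁻¹ * (w.2.1 - w.2.2) ∈ Z)).card) : InR P (T ^ 25) (q / q') := by
  set W := (((P ×ˢ P) ×ˢ (P ×ˢ P)).filter (fun w =>
      q⁻¹ * (w.1.1 - w.1.2) - q'⁻¹ * (w.2.1 - w.2.2) ∈ Z)) with hW
  set n : ℝ := (P.card : ℝ) with hn
  have hn0 : 0 < n := by rw [hn]; exact_mod_cast hP.card_pos
  have hT0 : 0 < T := by linarith
  let f : (F × F) × (F × F) → F × F × F := fun w => (w.1.2, w.2.2, q⁻¹ * (w.1.1 - w.1.2) - q'⁻¹ * (w.2.1 - w.2.2))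
  have hmap : ∀ w ∈ W, f w ∈ P ×ˢ P ×ˢ Z := by
    intro w hw
    simp only [hW, Finset.mem_filter, Finset.mem_product] at hw
    simp only [f, Finset.mem_product]
    tauto
  have hWne : W.Nonempty := by
    rw [← Finset.card_pos]
    have : 0 < n ^ 4 / T := by positivity
    exact_mod_cast this.trans_le h
  have htne : (P ×ˢ P ×ˢ Z).Nonempty := by
    obtain ⟨w, hw⟩ := hWne
    exact ⟨_, hmap w hw⟩
  obtain ⟨⟨β, γ, z⟩, -, hfib⟩ := Finset.exists_le_card_fiber_of_nsmul_le_card_of_maps_to (M := ℝ) (b := n / T ^ 3)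
    hmap htne (by
      rw [nsmul_eq_mul, Finset.card_product, Finset.card_product]
      push_cast
      rw [← hn]
      refine le_trans ?_ h
      calc n * (n * Z.card) * (n / T ^ 3) ≤ n * (n * (T ^ 2 * n)) * (n / T ^ 3) := by gcongr
        _ = n ^ 4 / T := by field_simp)
  set V := W.filter (fun w => f w = (β, γ, z)) with hV
  set P1 := V.image (fun w => w.1.1) with hP1
  set ξ := q / q' with hξ
  have hξ0 : ξ ≠ 0 := div_ne_zero hq hq'
  have hVmem : ∀ w ∈ V, w.1.1 ∈ P ∧ w.2.1 ∈ P ∧ w.1.2 = β ∧ w.2.2 = γ ∧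
      w.1.1 = (β + q * z - ξ * γ) + ξ * w.2.1 := by
    intro w hw
    simp only [hV, hW, f, Finset.mem_filter, Finset.mem_product, Prod.mk.injEq] at hw
    obtain ⟨⟨⟨⟨h1, h2⟩, h3, h4⟩, h5⟩, h6, h7, h8⟩ := hw
    refine ⟨h1, h3, h6, h7, ?_⟩
    rw [← h8, ← h6, ← h7, hξ]
    field_simp
    ring
  have hinj : Set.InjOn (fun w : (F × F) × (F × F) => w.1.1) V := by
    rintro ⟨⟨a, b⟩, c, d⟩ hw ⟨⟨a', b'⟩, c', d'⟩ hw' h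
    obtain ⟨-, -, h1, h2, h3⟩ := hVmem _ hw
    obtain ⟨-, -, h1', h2', h3'⟩ := hVmem _ hw'
    simp only at h1 h2 h3 h1' h2' h3' h
    have : ξ * c = ξ * c' := by
      have := h3.symm.trans (h.trans h3')
      exact add_left_cancel this
    have := mul_left_cancel₀ hξ0 this
    simp [h, h1, h2, h1', h2', this]
  have hP1c : n / T ^ 3 ≤ P1.card := by
    rw [hP1, Finset.card_image_of_injOn hinj]; exact hfib
  have hP1P : P1 ⊆ P := by
    intro x hx
    obtain ⟨w, hw, rfl⟩ := Finset.mem_image.1 hx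
    exact (hVmem w hw).1
  have hsub : dil ξ P - P1 ⊆ (dil ξ P - dil ξ P) - {β + q * z - ξ * γ} := by
    intro x hx
    obtain ⟨u, hu, v, hv, rfl⟩ := Finset.mem_sub.1 hx
    obtain ⟨w, hw, rfl⟩ := Finset.mem_image.1 hv
    obtain ⟨-, h3, -, -, h5⟩ := hVmem w hw
    refine Finset.mem_sub.2 ⟨u - ξ * w.2.1, Finset.sub_mem_sub hu (mem_dil.2 ⟨_, h3, rfl⟩), _,
      Finset.mem_singleton_self _, ?_⟩
    rw [h5]; ring
  have hc2 : ((dil ξ P - P1).card : ℝ) ≤ T ^ 11 * n := by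
    refine le_trans ?_ hPP
    have h1 : (dil ξ P - P1).card ≤ (dil ξ P - dil ξ P).card := by
      refine (Finset.card_le_card hsub).trans ?_
      simp [Finset.sub_singleton, Finset.card_image_of_injective _ (sub_left_injective)]
    have h2 : dil ξ P - dil ξ P = dil ξ (P - P) := by
      have := dil_sub_dil ξ 1 P
      rwa [mul_one, dil_one] at this
    rw [h2, card_dil hξ0] at h1
    exact_mod_cast h1
  have hc1 : ((P - P1).card : ℝ) ≤ T ^ 11 * n := by
    refine le_trans ?_ hPP
    exact_mod_cast Finset.card_le_card (Finset.sub_subset_sub_left hP1P)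
  have hr := Finset.ruzsa_triangle_inequality_sub_sub_sub P P1 (dil ξ P)
  have hr' : ((P - dil ξ P).card : ℝ) * P1.card ≤ (P - P1).card * (dil ξ P - P1).card := by exact_mod_cast hr
  unfold InR
  rw [← hn]
  have : ((P - dil ξ P).card : ℝ) * (n / T ^ 3) ≤ (T ^ 11 * n) * (T ^ 11 * n) :=
    (mul_le_mul_of_nonneg_left hP1c (Nat.cast_nonneg _)).trans (hr'.trans
      (mul_le_mul hc1 hc2 (Nat.cast_nonneg _) (by positivity)))
  rw [← mul_div_assoc, div_le_iff₀ (by positivity)] at this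
  apply le_of_mul_le_mul_right _ hn0
  linarith

lemma step3 (B : Finset F) (hB : B.Nonempty) (y T : ℝ) (hy : 2 ≤ y) (hyT : y ^ 530 ≤ T)
    (P : Finset F) (hP : P.Nonempty) (Q : Finset F) (hQ : Q.Nonempty)
    (hQ2 : ∀ q ∈ Q, q ≠ 0 ∧
      1 / y ^ 264 * B.card * (P ×ˢ P).card ≤ ∑ b ∈ P ×ˢ P, (rep B (q⁻¹ * (b.1 - b.2)) : ℝ))
    (hZ : ((pop B (B.card / y ^ 530)).card : ℝ) ≤ T ^ 2 * P.card)
    (hPP : ((P - P).card : ℝ) ≤ T ^ 11 * P.card) :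
    ∃ Ξ : Finset F, (Q.card : ℝ) ≤ T * Ξ.card ∧ ∀ ξ ∈ Ξ, InR P (T ^ 25) ξ := by
  set N : ℝ := (B.card : ℝ) with hN
  have hN0 : 0 < N := by rw [hN]; exact_mod_cast hB.card_pos
  have hy0 : 0 < y := by linarith
  have hy1 : 1 ≤ y := by linarith
  have hT1 : 1 ≤ T := (one_le_pow₀ hy1).trans hyT
  set PP := P ×ˢ P with hPPdef
  set n : ℝ := (P.card : ℝ) with hn
  have hn0 : 0 < n := by rw [hn]; exact_mod_cast hP.card_pos
  have hPPc : (PP.card : ℝ) = n ^ 2 := by rw [hPPdef, Finset.card_product]; push_cast; rw [hn]; ring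
  set m : ℝ := (Q.card : ℝ) with hm
  have hm0 : 0 < m := by rw [hm]; exact_mod_cast hQ.card_pos
  set Y : ℝ := y ^ 528 with hY
  have hY0 : 0 < Y := by positivity
  have h4Y : 4 * Y ≤ y ^ 530 := by
    have : y ^ 530 = y ^ 2 * Y := by rw [hY, ← pow_add]
    rw [this]; gcongr; nlinarith
  let a : F × (F × F) → F := fun i => i.1⁻¹ * (i.2.1 - i.2.2)
  have c1 := corr (Q ×ˢ PP) a B hB (1 / y ^ 264) (by positivity) (by
    rw [Finset.sum_product, Finset.card_product]
    push_cast
    calc _ = Q.card • (1 / y ^ 264 * N * PP.card) := by rw [nsmul_eq_mul]; ring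
      _ ≤ _ := Finset.card_nsmul_le_sum _ _ _ (fun q hq => (hQ2 q hq).2))
  let S : F → F → ℝ := fun q q' => ∑ w ∈ PP ×ˢ PP,
    (rep B (q⁻¹ * (w.1.1 - w.1.2) - q'⁻¹ * (w.2.1 - w.2.2)) : ℝ)
  have c2 : N * m ^ 2 * n ^ 4 / Y ≤ ∑ q ∈ Q, ∑ q' ∈ Q, S q q' := by
    have e : ∑ i ∈ Q ×ˢ PP, ∑ j ∈ Q ×ˢ PP, (rep B (a i - a j) : ℝ) = ∑ q ∈ Q, ∑ q' ∈ Q, S q q' := by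
      rw [Finset.sum_product]
      refine Finset.sum_congr rfl fun q _ => ?_
      simp only [Finset.sum_product Q PP]
      rw [Finset.sum_comm]
      refine Finset.sum_congr rfl fun q' _ => ?_
      simp only [S]
      rw [Finset.sum_product PP PP]
    rw [← e]
    refine le_trans (le_of_eq ?_) c1
    rw [Finset.card_product]
    push_cast
    rw [hPPc, ← hm, ← hN, hY]
    have : y ^ 528 = (y ^ 264) ^ 2 := by rw [← pow_mul]
    rw [this]
    field_simp
  obtain ⟨q, hq, c3⟩ : ∃ q ∈ Q, N * m * n ^ 4 / Y ≤ ∑ q' ∈ Q, S q q' := by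
    apply Finset.exists_le_of_sum_le hQ
    rw [Finset.sum_const, nsmul_eq_mul, ← hm]
    refine le_trans (le_of_eq ?_) c2
    ring
  have hSle : ∀ q', S q q' ≤ N * n ^ 4 := by
    intro q'
    refine (Finset.sum_le_card_nsmul _ _ N (fun w _ => rep_le B _)).trans (le_of_eq ?_)
    rw [nsmul_eq_mul, Finset.card_product]; push_cast; rw [hPPc]; ring
  have c4 := popular_count Q (S q) (N * n ^ 4) (N * n ^ 4 / (2 * Y)) (fun q' _ => hSle q') (by
    refine le_trans (le_of_eq ?_) c3
    rw [← hm]; field_simp) (by positivity)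
  set Q1 := Q.filter (fun q' => N * n ^ 4 / (2 * Y) ≤ S q q') with hQ1
  have c5 : m ≤ 2 * Y * Q1.card := by
    have h1 : N * n ^ 4 * (m / (2 * Y)) ≤ N * n ^ 4 * Q1.card := by
      refine le_trans (le_of_eq ?_) c4
      rw [← hm]; field_simp
    have h2 := le_of_mul_le_mul_left h1 (by positivity)
    rw [div_le_iff₀ (by positivity)] at h2
    linarith
  have hq0 := (hQ2 q hq).1
  refine ⟨Q1.image (fun q' => q / q'), ?_, ?_⟩
  · rw [Finset.card_image_of_injOn]
    · refine c5.trans ?_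
      gcongr
      linarith
    · intro u hu v hv huv
      simp only at huv
      have hu0 := (hQ2 u (Finset.filter_subset _ _ hu)).1
      have hv0 := (hQ2 v (Finset.filter_subset _ _ hv)).1
      field_simp at huv
      exact huv.symm
  · intro ξ hξ
    obtain ⟨q', hq', rfl⟩ := Finset.mem_image.1 hξ
    obtain ⟨hq'Q, hS⟩ := Finset.mem_filter.1 hq'
    apply fiberR P (pop B (N / y ^ 530)) hP T hT1 q q' hq0 (hQ2 q' hq'Q).1 hZ hPP
    have c6 := popular_count (PP ×ˢ PP) (fun w => (rep B (q⁻¹ * (w.1.1 - w.1.2) - q'⁻¹ * (w.2.1 - w.2.2)) : ℝ))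
      N (N / (4 * Y)) (fun w _ => rep_le B _) (by
        refine le_trans (le_of_eq ?_) hS
        rw [Finset.card_product]; push_cast; rw [hPPc]; field_simp; ring) (by positivity)
    have c7 : n ^ 4 / (4 * Y) ≤ (((PP ×ˢ PP).filter (fun w => N / (4 * Y) ≤
        (rep B (q⁻¹ * (w.1.1 - w.1.2) - q'⁻¹ * (w.2.1 - w.2.2)) : ℝ))).card : ℝ) := by
      apply le_of_mul_le_mul_left _ hN0
      refine le_trans (le_of_eq ?_) c6
      rw [Finset.card_product]; push_cast; rw [hPPc]; ring
    rw [← hn]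
    calc n ^ 4 / T ≤ n ^ 4 / (4 * Y) := by gcongr; linarith
      _ ≤ _ := c7
      _ ≤ _ := by
        norm_cast
        apply Finset.card_le_card
        apply Finset.monotone_filter_right
        intro w _ hw
        refine mem_pop.2 (le_trans ?_ hw)
        gcongr
end
end S10

open scoped BigOperators
namespace S10
open scoped Classical Pointwise
open Finset

lemma core {p : ℕ} [Fact p.Prime] (B : Finset (ZMod p)) (hB0 : (0 : ZMod p) ∉ B)
    (hBp : (B.card : ℝ) ^ 2 < p) (y T : ℝ) (hy : 2 ≤ y) (hyT : y ^ 530 ≤ T) (e r : ℕ)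
    (he : e = 25 * 132 * 132 * 132) (hr : e + 10 ≤ r) (hN : (B.card : ℝ) = T ^ (4 * r + 4))
    (h1 : T ^ (r + 1) ≤ ((pop B (B.card / y)).card : ℝ))
    (h2 : ((pop B (B.card / y ^ 530)).card : ℝ) ≤ T * (pop B (B.card / y)).card)
    (h3 : ∀ D ⊆ B, (B.card : ℝ) / y ^ 2 ≤ D.card → T ^ r ≤ ((mpop D (B.card / y ^ 130)).card : ℝ)) :
    False := by
  have hy0 : 0 < y := by linarith
  have hy1 : 1 ≤ y := by linarith
  have hT2 : 2 ^ 10 ≤ T := by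
    refine le_trans ?_ hyT
    calc (2:ℝ) ^ 10 ≤ y ^ 10 := by gcongr
      _ ≤ y ^ 530 := pow_le_pow_right₀ hy1 (by norm_num)
  have hyT' : y ≤ T := (le_self_pow₀ hy1 (by norm_num)).trans hyT
  have hT2' : 2 ≤ T := by norm_num at hT2; linarith
  have hT27 : 27 ≤ T := by norm_num at hT2; linarith
  have hT1 : 1 ≤ T := by linarith
  have hT0 : 0 < T := by linarith
  have hN0 : (0:ℝ) < B.card := by rw [hN]; positivity
  have hB : B.Nonempty := by rw [← Finset.card_pos]; exact_mod_cast hN0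
  have hne : (pop B (B.card / y)).Nonempty := by
    rw [← Finset.card_pos]
    have : 0 < T ^ (r + 1) := by positivity
    exact_mod_cast this.trans_le h1
  obtain ⟨P, hPs, hPc, hPP⟩ := step1 B hB y T hy hyT hne h2
  have hPge : T ^ r ≤ (P.card : ℝ) := by
    apply le_of_mul_le_mul_left _ hT0
    calc T * T ^ r = T ^ (r + 1) := by ring
      _ ≤ _ := h1.trans hPc
  have hPne : P.Nonempty := by
    rw [← Finset.card_pos]
    have : 0 < T ^ r := by positivity
    exact_mod_cast this.trans_le hPge
  have hPle : (P.card : ℝ) ≤ T ^ (4 * r + 5) := by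
    have a1 : (P.card : ℝ) ≤ (pop B (B.card / y)).card := by exact_mod_cast Finset.card_le_card hPs
    have a2 := pop_card_le B (B.card / y)
    have a3 : ((pop B (B.card / y)).card : ℝ) ≤ B.card * y := by
      rw [← mul_div_assoc, div_le_iff₀ hy0] at a2
      apply le_of_mul_le_mul_right _ hN0
      linarith
    calc _ ≤ _ := a1.trans a3
      _ ≤ T ^ (4 * r + 4) * T := by rw [hN]; gcongr
      _ = _ := by ring
  obtain ⟨D, hDB, hDc, hQ⟩ := step2 B hB0 hB y hy P hPne hPs
  have hQc := h3 D hDB hDc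
  have hQne : (mpop D (B.card / y ^ 130)).Nonempty := by
    rw [← Finset.card_pos]
    have : 0 < T ^ r := by positivity
    exact_mod_cast this.trans_le hQc
  obtain ⟨Ξ, hΞc, hΞ⟩ := step3 B hB y T hy hyT P hPne _ hQne hQ (by
    refine h2.trans ?_
    calc _ ≤ T * (T * P.card) := by gcongr
      _ = _ := by ring) hPP
  have hΞ1 : T ^ r ≤ T * Ξ.card := hQc.trans hΞc
  have hTe : 2 * T ^ e ≤ P.card := by
    refine le_trans ?_ hPge
    calc 2 * T ^ e ≤ T * T ^ e := by gcongr
      _ = T ^ (e + 1) := by rw [pow_succ]; ring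
      _ ≤ _ := pow_le_pow_right₀ hT1 (by omega)
  have key : ∀ L : ℝ, 1 ≤ L → L ≤ T ^ e →
      ((Finset.univ.filter (fun a : ZMod p => InR P L a)).card : ℝ) ≤ T ^ (4 * r + e + 6) := by
    intro L hL1 hL
    refine (card_inR P L hL1 (by linarith)).trans ?_
    calc 2 * L * P.card ≤ T * T ^ e * T ^ (4 * r + 5) := by gcongr
      _ = T ^ (4 * r + e + 6) := by rw [← pow_succ', ← pow_add]; congr 1; omega
  have key2 : ∀ L : ℝ, 1 ≤ L → L ≤ T ^ e →
      (Finset.univ.filter (fun a : ZMod p => InR P L a)).card < p := by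
    intro L hL1 hL
    have : ((Finset.univ.filter (fun a : ZMod p => InR P L a)).card : ℝ) < p := by
      refine (key L hL1 hL).trans_lt (lt_of_le_of_lt ?_ hBp)
      rw [hN, ← pow_mul]
      exact pow_le_pow_right₀ hT1 (by omega)
    exact_mod_cast this
  have hK1 : 27 ≤ T ^ 25 := hT27.trans (le_self_pow₀ hT1 (by norm_num))
  set K1 := T ^ 25 with hK1d
  set K2 := K1 ^ 132 with hK2d
  set K3 := K2 ^ 132 with hK3d
  set K4 := K3 ^ 132 with hK4d
  have l1 : K1 ≤ K2 := le_self_pow₀ (by linarith) (by norm_num)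
  have l2 : K2 ≤ K3 := le_self_pow₀ (by linarith) (by norm_num)
  have l3 : K3 ≤ K4 := le_self_pow₀ (by linarith) (by norm_num)
  have l4 : K4 = T ^ e := by rw [hK4d, hK3d, hK2d, hK1d, ← pow_mul, ← pow_mul, ← pow_mul, he]
  have i1 : InR P K1 1 := by
    unfold InR
    rw [dil_one, hK1d]
    refine hPP.trans ?_
    gcongr
    norm_num
  have hΞT : T ≤ Ξ.card := by
    apply le_of_mul_le_mul_left _ hT0
    refine le_trans ?_ hΞ1
    calc T * T = T ^ 2 := by ring
      _ ≤ _ := pow_le_pow_right₀ hT1 (by omega)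
  have hΞ2 : 2 ≤ Ξ.card := by exact_mod_cast hT2'.trans hΞT
  obtain ⟨Q1, q1, q1'⟩ := pivot P K1 hK1 hPne i1 Ξ hΞ2 hΞ (key2 _ (by linarith) (by linarith))
  obtain ⟨Q2, q2, q2'⟩ := pivot P K2 (by linarith) hPne (i1.mono l1) Q1
    (by rw [q1]; nlinarith) q1' (key2 _ (by linarith) (by linarith))
  have hQ12 : 2 ≤ Q1.card := by rw [q1]; nlinarith
  obtain ⟨Q3, q3, q3'⟩ := pivot P K3 (by linarith) hPne (i1.mono (l1.trans l2)) Q2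
    (by rw [q2]; nlinarith) q2' (key2 _ (by linarith) (by linarith))
  have hQ3 : (Q3.card : ℝ) ≤ T ^ (4 * r + e + 6) := by
    refine le_trans ?_ (key K4 (by linarith) (by linarith))
    norm_cast
    apply Finset.card_le_card
    intro q hq
    exact Finset.mem_filter.2 ⟨Finset.mem_univ _, q3' q hq⟩
  rw [q3, q2, q1] at hQ3
  push_cast at hQ3
  have f1 : T ^ (8 * r) ≤ T ^ (4 * r + e + 14) := by
    calc T ^ (8 * r) = (T ^ r) ^ 8 := by rw [← pow_mul, mul_comm]
      _ ≤ (T * Ξ.card) ^ 8 := by gcongr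
      _ = T ^ 8 * (((Ξ.card : ℝ) ^ 2) ^ 2) ^ 2 := by rw [mul_pow]; congr 1; rw [← pow_mul, ← pow_mul]
      _ ≤ T ^ 8 * T ^ (4 * r + e + 6) := by gcongr
      _ = _ := by rw [← pow_add]; congr 1; omega
  have f2 : 8 * r ≤ 4 * r + e + 14 := (pow_le_pow_iff_right₀ (by linarith)).1 f1
  omega
end S10

open scoped BigOperators
namespace S10
open scoped Classical Pointwise
open Finset

lemma color_count {V : Type*} [Fintype V] [DecidableEq V] (m : ℕ) [NeZero m] (e : Finset V) :
    (Finset.univ.filter (fun χ : V → Fin m => ∀ v ∈ e, χ v = 0)).card * m ^ e.card = m ^ Fintype.card V := by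
  have h : Finset.univ.filter (fun χ : V → Fin m => ∀ v ∈ e, χ v = 0)
      = Fintype.piFinset (fun v => if v ∈ e then ({0} : Finset (Fin m)) else Finset.univ) := by
    ext χ
    simp only [Finset.mem_filter, Finset.mem_univ, true_and, Fintype.mem_piFinset]
    constructor
    · intro h v
      by_cases hv : v ∈ e
      · simp [hv, h v hv]
      · simp [hv]
    · intro h v hv
      have := h v
      simpa [hv] using this
  rw [h, Fintype.card_piFinset]
  have h2 : m ^ e.card = ∏ v : V, if v ∈ e then m else 1 := by
    rw [Finset.prod_ite_mem, Finset.univ_inter, Finset.prod_const]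
  rw [h2, ← Finset.prod_mul_distrib, ← Finset.card_univ, ← Finset.prod_const]
  refine Finset.prod_congr rfl fun v _ => ?_
  by_cases hv : v ∈ e <;> simp [hv]

lemma hyper {V : Type*} [Fintype V] [DecidableEq V] (D : Finset V) (E : Finset (Finset V)) (r m : ℕ)
    (hm : 0 < m) (hE : ∀ e ∈ E, e.card = r + 1) (h : 2 * (E.card : ℝ) ≤ D.card * (m:ℝ) ^ r) :
    ∃ S ⊆ D, (D.card : ℝ) ≤ 2 * m * S.card ∧ ∀ e ∈ E, ¬ e ⊆ S := by
  have : NeZero m := ⟨hm.ne'⟩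
  have hm0 : (0:ℝ) < m := by exact_mod_cast hm
  set M : ℝ := (m:ℝ) ^ Fintype.card V with hM
  have hM0 : 0 < M := by positivity
  have cc : ∀ e : Finset V, ((Finset.univ.filter (fun χ : V → Fin m => ∀ v ∈ e, χ v = 0)).card : ℝ)
      = M / (m:ℝ) ^ e.card := by
    intro e
    rw [eq_div_iff (by positivity)]
    rw [hM]
    exact_mod_cast color_count m e
  have s1 : ∑ χ : V → Fin m, ((D.filter (fun v => χ v = 0)).card : ℝ) = D.card * (M / m) := by
    rw [double_count Finset.univ D (fun (χ : V → Fin m) v => χ v = 0), ← nsmul_eq_mul, ← Finset.sum_const]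
    refine Finset.sum_congr rfl fun v _ => ?_
    have := cc {v}
    simpa using this
  have s2 : ∑ χ : V → Fin m, ((E.filter (fun e => ∀ v ∈ e, χ v = 0)).card : ℝ) = E.card * (M / m ^ (r + 1)) := by
    rw [double_count Finset.univ E (fun (χ : V → Fin m) e => ∀ v ∈ e, χ v = 0), ← nsmul_eq_mul, ← Finset.sum_const]
    refine Finset.sum_congr rfl fun e he => ?_
    rw [cc e, hE e he]
  obtain ⟨χ, -, hχ⟩ : ∃ χ ∈ (Finset.univ : Finset (V → Fin m)), (D.card : ℝ) / (2 * m) ≤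
      ((D.filter (fun v => χ v = 0)).card : ℝ) - ((E.filter (fun e => ∀ v ∈ e, χ v = 0)).card : ℝ) := by
    apply Finset.exists_le_of_sum_le Finset.univ_nonempty
    rw [Finset.sum_sub_distrib, s1, s2, Finset.sum_const, nsmul_eq_mul, Finset.card_univ]
    simp only [Fintype.card_fun, Fintype.card_fin]
    push_cast
    rw [← hM]
    have h1 : (E.card : ℝ) * (M / m ^ (r + 1)) ≤ D.card * (M / (2 * m)) := by
      calc (E.card : ℝ) * (M / m ^ (r + 1)) = (2 * E.card) * (M / (2 * m ^ (r + 1))) := by field_simp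
        _ ≤ (D.card * (m:ℝ) ^ r) * (M / (2 * m ^ (r + 1))) := by gcongr
        _ = _ := by rw [pow_succ]; field_simp
    have h2 : (D.card : ℝ) * (M / m) = 2 * (D.card * (M / (2 * m))) := by field_simp
    have h3 : M * (D.card / (2 * m)) = D.card * (M / (2 * m)) := by field_simp
    linarith
  set D0 := D.filter (fun v => χ v = 0) with hD0
  set E0 := E.filter (fun e => ∀ v ∈ e, χ v = 0) with hE0
  have hne : ∀ e ∈ E, ∃ v, v ∈ e := by
    intro e he
    have : 0 < e.card := by rw [hE e he]; omega
    exact Finset.card_pos.1 this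
  have hEE : ∀ e : {e // e ∈ E0}, ∃ v, v ∈ e.1 := fun e => hne e.1 (Finset.filter_subset _ _ e.2)
  choose f hf using hEE
  set W := E0.attach.image f with hW
  have hWc : W.card ≤ E0.card := Finset.card_image_le.trans (by simp)
  refine ⟨D0 \ W, Finset.sdiff_subset.trans (Finset.filter_subset _ _), ?_, ?_⟩
  · have h1 : D0.card ≤ (D0 \ W).card + W.card := by
      have := Finset.le_card_sdiff W D0
      omega
    have h2 : (D0.card : ℝ) ≤ (D0 \ W).card + E0.card := by exact_mod_cast h1.trans (by omega)
    have h3 : (D.card : ℝ) / (2 * m) ≤ (D0 \ W).card := by linarith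
    rw [div_le_iff₀ (by positivity)] at h3
    linarith
  · intro e he hes
    have heE : e ∈ E0 := by
      refine Finset.mem_filter.2 ⟨he, fun v hv => ?_⟩
      exact (Finset.mem_filter.1 (Finset.mem_sdiff.1 (hes hv)).1).2
    have h1 := hes (hf ⟨e, heE⟩)
    exact (Finset.mem_sdiff.1 h1).2 (Finset.mem_image.2 ⟨⟨e, heE⟩, Finset.mem_attach _ _, rfl⟩)

lemma sep_subset {F : Type*} [Field F] [DecidableEq F] (X : Finset F) (μ : F) (hμ : μ ≠ 0) :
    ∃ Y ⊆ X, Disjoint Y (Y.image (fun x => x + μ)) ∧ X.card ≤ 3 * Y.card := by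
  obtain ⟨Y, hY, hmax⟩ := Finset.exists_max_image
    (X.powerset.filter (fun Y => Disjoint Y (Y.image (fun x => x + μ)))) Finset.card
    ⟨∅, by simp⟩
  simp only [Finset.mem_filter, Finset.mem_powerset] at hY hmax
  refine ⟨Y, hY.1, hY.2, ?_⟩
  have hsub : X ⊆ Y ∪ (Y.image (fun x => x + μ) ∪ Y.image (fun x => x - μ)) := by
    intro x hx
    by_contra hcon
    simp only [Finset.mem_union, not_or, Finset.mem_image, not_exists, not_and] at hcon
    obtain ⟨h1, h2, h3⟩ := hcon
    have := hmax (insert x Y) ⟨by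
      intro z hz
      rcases Finset.mem_insert.1 hz with rfl | hz
      · exact hx
      · exact hY.1 hz, by
      rw [Finset.disjoint_left]
      intro z hz hz2
      obtain ⟨w, hw, rfl⟩ := Finset.mem_image.1 hz2
      rcases Finset.mem_insert.1 hw with rfl | hw
      · rcases Finset.mem_insert.1 hz with hz | hz
        · exact hμ (by simpa using hz)
        · exact h3 _ hz (by ring)
      · rcases Finset.mem_insert.1 hz with hz | hz
        · exact h2 w hw hz
        · exact (Finset.disjoint_left.1 hY.2) hz (Finset.mem_image_of_mem _ hw)⟩
    rw [Finset.card_insert_of_notMem h1] at this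
    omega
  have := Finset.card_le_card hsub
  have a1 := Finset.card_union_le Y (Y.image (fun x => x + μ) ∪ Y.image (fun x => x - μ))
  have a2 := Finset.card_union_le (Y.image (fun x => x + μ)) (Y.image (fun x => x - μ))
  have a3 : (Y.image (fun x => x + μ)).card ≤ Y.card := Finset.card_image_le
  have a4 : (Y.image (fun x => x - μ)).card ≤ Y.card := Finset.card_image_le
  omega

lemma sidon_random {F : Type*} [Field F] [DecidableEq F] [Fintype F] (D : Finset F) (k m : ℕ) (hm : 0 < m)
    (h : 2 * ∑ μ ∈ Finset.univ.filter (fun μ : F => μ ≠ 0), (rep D μ : ℝ) ^ (k + 1) ≤ D.card * (m:ℝ) ^ (2 * k + 1)) :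
    ∃ S ⊆ D, (D.card : ℝ) ≤ 2 * m * S.card ∧ ∀ μ ≠ 0, rep S μ ≤ 3 * (k + 1) := by
  let G : F → Finset (Finset F) := fun μ =>
    (((D.filter (fun x => x + μ ∈ D)).powersetCard (k + 1)).filter
      (fun Y => Disjoint Y (Y.image (fun x => x + μ)))).image (fun Y => Y ∪ Y.image (fun x => x + μ))
  have hG : ∀ μ, ((G μ).card : ℝ) ≤ (rep D μ : ℝ) ^ (k + 1) := by
    intro μ
    have : (G μ).card ≤ (rep D μ) ^ (k + 1) := by
      refine Finset.card_image_le.trans ((Finset.card_filter_le _ _).trans ?_)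
      rw [Finset.card_powersetCard]
      exact Nat.choose_le_pow _ _
    exact_mod_cast this
  set E := (Finset.univ.filter (fun μ : F => μ ≠ 0)).biUnion G with hE
  obtain ⟨S, hS, hSc, hSE⟩ := hyper D E (2 * k + 1) m hm (by
    intro e he
    simp only [hE, Finset.mem_biUnion] at he
    obtain ⟨μ, -, he⟩ := he
    obtain ⟨Y, hY, rfl⟩ := Finset.mem_image.1 he
    obtain ⟨h1, h2⟩ := Finset.mem_filter.1 hY
    rw [Finset.card_union_of_disjoint h2, Finset.card_image_of_injective _ (add_left_injective μ),
      (Finset.mem_powersetCard.1 h1).2]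
    ring) (by
    refine le_trans ?_ h
    gcongr
    have : E.card ≤ ∑ μ ∈ Finset.univ.filter (fun μ : F => μ ≠ 0), (G μ).card := Finset.card_biUnion_le
    calc (E.card : ℝ) ≤ ∑ μ ∈ Finset.univ.filter (fun μ : F => μ ≠ 0), ((G μ).card : ℝ) := by exact_mod_cast this
      _ ≤ _ := Finset.sum_le_sum fun μ _ => hG μ)
  refine ⟨S, hS, hSc, ?_⟩
  intro μ hμ
  by_contra hcon
  push Not at hcon
  obtain ⟨Y, hYX, hYd, hYc⟩ := sep_subset (S.filter (fun x => x + μ ∈ S)) μ hμ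
  have hYk : k + 1 ≤ Y.card := by
    unfold rep at hcon
    omega
  obtain ⟨Y', hY', hY'c⟩ := Finset.exists_subset_card_eq hYk
  apply hSE (Y' ∪ Y'.image (fun x => x + μ))
  · refine Finset.mem_biUnion.2 ⟨μ, by simp [hμ], Finset.mem_image.2 ⟨Y', Finset.mem_filter.2 ⟨?_, ?_⟩, rfl⟩⟩
    · refine Finset.mem_powersetCard.2 ⟨?_, hY'c⟩
      intro x hx
      obtain ⟨h1, h2⟩ := Finset.mem_filter.1 (hYX (hY' hx))
      exact Finset.mem_filter.2 ⟨hS h1, hS h2⟩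
    · exact hYd.mono hY' (Finset.image_subset_image hY')
  · intro x hx
    rcases Finset.mem_union.1 hx with hx | hx
    · exact (Finset.mem_filter.1 (hYX (hY' hx))).1
    · obtain ⟨z, hz, rfl⟩ := Finset.mem_image.1 hx
      exact (Finset.mem_filter.1 (hYX (hY' hz))).2

/-- moment bound -/
lemma moment {F : Type*} [Field F] [DecidableEq F] [Fintype F] (D : Finset F) (k : ℕ) (t : ℝ) (ht : 0 ≤ t) :
    ∑ μ ∈ Finset.univ.filter (fun μ : F => μ ≠ 0), (rep D μ : ℝ) ^ (k + 1) ≤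
      ((Finset.univ.filter (fun μ : F => μ ≠ 0 ∧ t ≤ (rep D μ : ℝ))).card : ℝ) * (D.card : ℝ) ^ (k + 1)
        + (D.card : ℝ) ^ 2 * t ^ k := by
  rw [← Finset.sum_filter_add_sum_filter_not (Finset.univ.filter (fun μ : F => μ ≠ 0)) (fun μ => t ≤ (rep D μ : ℝ)),
    Finset.filter_filter]
  gcongr ?_ + ?_
  · rw [← nsmul_eq_mul]
    apply Finset.sum_le_card_nsmul
    intro μ _
    gcongr
    exact_mod_cast rep_le D μ
  · calc
      _ ≤ ∑ μ ∈ (Finset.univ.filter (fun μ : F => μ ≠ 0)).filter (fun μ => ¬ t ≤ (rep D μ : ℝ)), (rep D μ : ℝ) * t ^ k := by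
        refine Finset.sum_le_sum fun μ hμ => ?_
        have := (Finset.mem_filter.1 hμ).2
        push Not at this
        rw [pow_succ']
        gcongr
      _ ≤ ∑ μ : F, (rep D μ : ℝ) * t ^ k :=
        Finset.sum_le_sum_of_subset_of_nonneg (Finset.subset_univ _) (fun _ _ _ => by positivity)
      _ = _ := by rw [← Finset.sum_mul, sum_rep]
end S10

open scoped BigOperators
namespace S10
open scoped Classical Pointwise
open Finset

lemma dense {F : Type*} [Field F] [DecidableEq F] [Fintype F] (D : Finset F) (y N : ℝ) (hy : 2 ≤ y) (k : ℕ)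
    (hk : 1 ≤ k) (hN : N = y ^ (40 * (k + 1))) (hD1 : N / y ^ 2 ≤ D.card) (hD2 : (D.card : ℝ) ≤ N)
    (hM : ((Finset.univ.filter (fun μ : F => μ ≠ 0 ∧ N / y ^ 129 ≤ (rep D μ : ℝ))).card : ℝ) ≤ y ^ (10 * (k + 1))) :
    ∃ S ⊆ D, y ^ (20 * (k + 1)) * y ≤ S.card ∧ ∀ μ ≠ 0, rep S μ ≤ 3 * (k + 1) := by
  have hy0 : 0 < y := by linarith
  have hy1 : 1 ≤ y := by linarith
  set M0 : ℝ := ((Finset.univ.filter (fun μ : F => μ ≠ 0 ∧ N / y ^ 129 ≤ (rep D μ : ℝ))).card : ℝ) with hM0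
  set h : ℝ := y ^ (20 * (k + 1)) with hh
  have hh0 : 0 < h := by positivity
  have hNh : N = h ^ 2 := by rw [hN, hh, ← pow_mul]; congr 1; ring
  have hN0 : 0 < N := by rw [hNh]; positivity
  set n : ℝ := (D.card : ℝ) with hn
  have hn0 : 0 < n := lt_of_lt_of_le (by positivity) hD1
  set m : ℕ := ⌊h / y ^ 4⌋₊ with hm
  have hx1 : 1 ≤ h / y ^ 4 := by
    rw [le_div_iff₀ (by positivity), one_mul, hh]
    exact pow_le_pow_right₀ hy1 (by omega)
  have hm1 : 1 ≤ m := Nat.le_floor (by simpa using hx1)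
  have hm1' : (1:ℝ) ≤ m := by exact_mod_cast hm1
  have hmle : (m:ℝ) ≤ h / y ^ 4 := Nat.floor_le (by positivity)
  have hmge : h / y ^ 5 ≤ m := by
    have h1 : h / y ^ 4 < m + 1 := Nat.lt_floor_add_one _
    have h2 : h / y ^ 5 = h / y ^ 4 / y := by field_simp
    rw [h2, div_le_iff₀ hy0]
    nlinarith
  have key : 2 * ∑ μ ∈ Finset.univ.filter (fun μ : F => μ ≠ 0), (rep D μ : ℝ) ^ (k + 1) ≤ n * (m:ℝ) ^ (2 * k + 1) := by
    have q1 := moment D k (N / y ^ 129) (by positivity)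
    rw [← hM0, ← hn] at q1
    have q2 : M0 * n ^ (k + 1) ≤ n * (y ^ (10 * (k + 1)) * h ^ (2 * k)) := by
      calc M0 * n ^ (k + 1) = n * (M0 * n ^ k) := by ring
        _ ≤ n * (y ^ (10 * (k + 1)) * N ^ k) := by gcongr
        _ = _ := by rw [hNh, ← pow_mul]
    have q3 : n ^ 2 * (N / y ^ 129) ^ k ≤ n * (h ^ (2 * k + 2) / y ^ (129 * k)) := by
      calc n ^ 2 * (N / y ^ 129) ^ k = n * (n * (N / y ^ 129) ^ k) := by ring
        _ ≤ n * (N * (N / y ^ 129) ^ k) := by gcongr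
        _ = _ := by rw [hNh, div_pow, ← pow_mul, ← pow_mul, pow_add]; ring
    have q4 : h ^ (2 * k + 1) / y ^ (10 * k + 5) ≤ (m:ℝ) ^ (2 * k + 1) := by
      calc _ = (h / y ^ 5) ^ (2 * k + 1) := by rw [div_pow, ← pow_mul]; ring_nf
        _ ≤ _ := by gcongr
    have hy4 : 4 ≤ y ^ 2 := by nlinarith
    have q5 : 4 * (y ^ (10 * (k + 1)) * h ^ (2 * k)) ≤ h ^ (2 * k + 1) / y ^ (10 * k + 5) := by
      rw [le_div_iff₀ (by positivity)]
      calc 4 * (y ^ (10 * (k + 1)) * h ^ (2 * k)) * y ^ (10 * k + 5)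
          ≤ y ^ 2 * (y ^ (10 * (k + 1)) * h ^ (2 * k)) * y ^ (10 * k + 5) := by gcongr
        _ = h ^ (2 * k) * y ^ (20 * k + 17) := by ring
        _ ≤ h ^ (2 * k) * y ^ (20 * (k + 1)) := by
          gcongr
          omega
        _ = _ := by rw [← hh]; ring
    have q6 : 4 * (h ^ (2 * k + 2) / y ^ (129 * k)) ≤ h ^ (2 * k + 1) / y ^ (10 * k + 5) := by
      rw [le_div_iff₀ (by positivity)]
      have : 4 * h * y ^ (10 * k + 5) ≤ y ^ (129 * k) := by
        calc 4 * h * y ^ (10 * k + 5) ≤ y ^ 2 * h * y ^ (10 * k + 5) := by gcongr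
          _ = y ^ (30 * k + 27) := by rw [hh]; ring
          _ ≤ _ := pow_le_pow_right₀ hy1 (by omega)
      calc 4 * (h ^ (2 * k + 2) / y ^ (129 * k)) * y ^ (10 * k + 5)
          = h ^ (2 * k + 1) * ((4 * h * y ^ (10 * k + 5)) / y ^ (129 * k)) := by ring
        _ ≤ h ^ (2 * k + 1) * 1 := by
          gcongr
          rw [div_le_one (by positivity)]; exact this
        _ = _ := by ring
    set W := h ^ (2 * k + 1) / y ^ (10 * k + 5) with hW
    calc _ ≤ 2 * (n * (W / 4) + n * (W / 4)) := by
          gcongr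
          refine q1.trans (add_le_add (q2.trans ?_) (q3.trans ?_))
          · exact mul_le_mul_of_nonneg_left (by linarith) hn0.le
          · exact mul_le_mul_of_nonneg_left (by linarith) hn0.le
      _ = n * W := by ring
      _ ≤ _ := by gcongr
  obtain ⟨S, hS, hSc, hSr⟩ := sidon_random D k m hm1 key
  refine ⟨S, hS, ?_, hSr⟩
  rw [← hn] at hSc
  have h1 : h ^ 2 / y ^ 2 ≤ 2 * (h / y ^ 4) * S.card := by
    rw [← hNh]
    refine hD1.trans (hSc.trans ?_)
    gcongr
  have h2 : 2 * (h / y ^ 4) * (h * y ^ 2 / 2) ≤ 2 * (h / y ^ 4) * S.card := by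
    refine le_trans (le_of_eq ?_) h1
    field_simp
  have h3 := le_of_mul_le_mul_left h2 (by positivity)
  refine le_trans ?_ h3
  have h4 : 0 ≤ h * y * (y - 2) := mul_nonneg (by positivity) (by linarith)
  linarith

section
variable {p : ℕ} [Fact p.Prime]

lemma g_ne {g : ZMod p} (hg : IsPrimitiveRoot g (p - 1)) : g ≠ 0 := by
  have hp : 2 ≤ p := (Fact.out : p.Prime).two_le
  exact hg.isUnit (by omega) |>.ne_zero

lemma e_inj {g : ZMod p} (hg : IsPrimitiveRoot g (p - 1)) {x y : ZMod p} (hx : x ≠ 0) (hy : y ≠ 0)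
    (h : g ^ x.val = g ^ y.val) : x = y := by
  have hg0 := g_ne hg
  have hx0 : x.val ≠ 0 := by rwa [Ne, ZMod.val_eq_zero]
  have hy0 : y.val ≠ 0 := by rwa [Ne, ZMod.val_eq_zero]
  have hxl := ZMod.val_lt x
  have hyl := ZMod.val_lt y
  obtain ⟨a, ha⟩ := Nat.exists_eq_succ_of_ne_zero hx0
  obtain ⟨b, hb⟩ := Nat.exists_eq_succ_of_ne_zero hy0
  rw [ha, hb, pow_succ, pow_succ] at h
  have h2 := hg.pow_inj (by omega) (by omega) (mul_right_cancel₀ hg0 h)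
  apply ZMod.val_injective p
  omega

lemma e_add {g : ZMod p} (hg : IsPrimitiveRoot g (p - 1)) (x μ : ZMod p) :
    g ^ (x + μ).val = g ^ μ.val * g ^ x.val ∨ g ^ (x + μ).val = g ^ μ.val * g⁻¹ * g ^ x.val := by
  have hg0 := g_ne hg
  have hp : 2 ≤ p := (Fact.out : p.Prime).two_le
  rcases lt_or_ge (x.val + μ.val) p with h | h
  · left
    rw [ZMod.val_add_of_lt h, pow_add, mul_comm]
  · right
    have h1 := ZMod.val_add_val_of_le h
    have h2 : g ^ p = g := ZMod.pow_card g
    have h3 : g ^ x.val * g ^ μ.val = g ^ (x + μ).val * g := by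
      rw [← pow_add, h1, pow_add, h2]
    field_simp
    rw [← h3]; ring

lemma transfer {g : ZMod p} (hg : IsPrimitiveRoot g (p - 1)) (A D : Finset (ZMod p)) (hA : ∀ x ∈ A, x ≠ 0)
    (t : ℝ) :
    ((Finset.univ.filter (fun μ : ZMod p => μ ≠ 0 ∧ t ≤ (rep (A.filter (fun x => g ^ x.val ∈ D)) μ : ℝ))).card : ℝ)
      ≤ 2 * (mpop D (t / 2)).card := by
  have hg0 := g_ne hg
  set C := A.filter (fun x => g ^ x.val ∈ D) with hC
  have h1 : ∀ μ, (rep C μ : ℝ) ≤ ((D.filter (fun x => g ^ μ.val * x ∈ D)).card : ℝ)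
      + ((D.filter (fun x => g ^ μ.val * g⁻¹ * x ∈ D)).card : ℝ) := by
    intro μ
    have : rep C μ ≤ ((D.filter (fun x => g ^ μ.val * x ∈ D)) ∪
       (D.filter (fun x => g ^ μ.val * g⁻¹ * x ∈ D))).card := by
      apply Finset.card_le_card_of_injOn (fun x => g ^ x.val)
      · intro x hx
        obtain ⟨a1, a2⟩ := Finset.mem_filter.1 hx
        have a3 := (Finset.mem_filter.1 a1).2
        have a4 := (Finset.mem_filter.1 a2).2
        refine Finset.mem_coe.2 (Finset.mem_union.2 ?_)
        rcases e_add hg x μ with h | h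
        · left; exact Finset.mem_filter.2 ⟨a3, h ▸ a4⟩
        · right; exact Finset.mem_filter.2 ⟨a3, h ▸ a4⟩
      · intro x hx y hy hxy
        have b1 := (Finset.mem_filter.1 (Finset.mem_filter.1 hx).1).1
        have b2 := (Finset.mem_filter.1 (Finset.mem_filter.1 hy).1).1
        exact e_inj hg (hA x b1) (hA y b2) hxy
    exact_mod_cast this.trans (Finset.card_union_le _ _)
  have h2 : Finset.univ.filter (fun μ : ZMod p => μ ≠ 0 ∧ t ≤ (rep C μ : ℝ)) ⊆
      Finset.univ.filter (fun μ : ZMod p => μ ≠ 0 ∧ g ^ μ.val ∈ mpop D (t / 2)) ∪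
      Finset.univ.filter (fun μ : ZMod p => μ ≠ 0 ∧ g ^ μ.val * g⁻¹ ∈ mpop D (t / 2)) := by
    intro μ hμ
    simp only [Finset.mem_filter, Finset.mem_univ, true_and, Finset.mem_union, mpop] at hμ ⊢
    have := h1 μ
    by_contra hcon
    simp only [hμ.1, ne_eq, not_false_eq_true, true_and, not_or, not_le] at hcon
    linarith [hμ.2]
  have h3 : (Finset.univ.filter (fun μ : ZMod p => μ ≠ 0 ∧ g ^ μ.val ∈ mpop D (t / 2))).card ≤ (mpop D (t / 2)).card := by
    apply Finset.card_le_card_of_injOn (fun x => g ^ x.val)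
    · intro x hx; exact (Finset.mem_filter.1 hx).2.2
    · intro x hx y hy hxy
      exact e_inj hg (Finset.mem_filter.1 hx).2.1 (Finset.mem_filter.1 hy).2.1 hxy
  have h4 : (Finset.univ.filter (fun μ : ZMod p => μ ≠ 0 ∧ g ^ μ.val * g⁻¹ ∈ mpop D (t / 2))).card ≤ (mpop D (t / 2)).card := by
    apply Finset.card_le_card_of_injOn (fun x => g ^ x.val * g⁻¹)
    · intro x hx; exact (Finset.mem_filter.1 hx).2.2
    · intro x hx y hy hxy
      exact e_inj hg (Finset.mem_filter.1 hx).2.1 (Finset.mem_filter.1 hy).2.1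
        (mul_right_cancel₀ (inv_ne_zero hg0) hxy)
  have h5 := (Finset.card_le_card h2).trans (Finset.card_union_le _ _)
  have : (Finset.univ.filter (fun μ : ZMod p => μ ≠ 0 ∧ t ≤ (rep C μ : ℝ))).card ≤ 2 * (mpop D (t / 2)).card := by
    omega
  exact_mod_cast this
end
end S10

open scoped BigOperators
namespace S10
open scoped Classical Pointwise
open Finset

lemma pop_anti {F : Type*} [Field F] [DecidableEq F] [Fintype F] (B : Finset F) {s t : ℝ} (h : s ≤ t) :
    pop B t ⊆ pop B s := fun _ hμ => mem_pop.2 (h.trans (mem_pop.1 hμ))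

lemma main {p : ℕ} [Fact p.Prime] {g : ZMod p} (hg : IsPrimitiveRoot g (p - 1)) (A : Finset (ZMod p))
    (hA : ∀ x ∈ A, x ≠ 0) (hAp : (A.card : ℝ) ^ 2 < p) (e ρ J : ℕ) (he : e = 25 * 132 * 132 * 132)
    (hρ : e + 11 ≤ 10 * ρ) (hJ : 30 * ρ + 3 ≤ J) (z : ℝ) (hz : 2 ≤ z)
    (hN : (A.card : ℝ) = z ^ (40 * (ρ * 530 ^ J))) :
    ∃ S : Finset (ZMod p), (S ⊆ A ∨ S ⊆ A.image (fun x => g ^ x.val)) ∧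
      (∀ μ ≠ 0, rep S μ ≤ 3 * (ρ * 530 ^ J)) ∧ z ^ (20 * (ρ * 530 ^ J)) * z ≤ S.card := by
  by_contra hcon
  have hz0 : 0 < z := by linarith
  have hz1 : 1 ≤ z := by linarith
  have hg0 := g_ne hg
  set B := A.image (fun x => g ^ x.val) with hB
  have hBA : B.card = A.card := Finset.card_image_of_injOn
    (fun x hx y hy hxy => e_inj hg (hA x hx) (hA y hy) hxy)
  set N : ℝ := (A.card : ℝ) with hNdef
  have hN0 : 0 < N := by rw [hN]; positivity
  set T : ℝ := z ^ (530 ^ J) with hT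
  let y : ℕ → ℝ := fun j => z ^ (530 ^ j)
  have hy2 : ∀ j, 2 ≤ y j := fun j => hz.trans (le_self_pow₀ hz1 (by positivity))
  have hyz : ∀ j, z ≤ y j := fun j => (le_self_pow₀ hz1 (by positivity))
  have hysucc : ∀ j, y j ^ 530 = y (j + 1) := by
    intro j
    simp only [y]
    rw [← pow_mul, pow_succ]
  have hyT : ∀ j, j ≤ J → y j ≤ T := by
    intro j hj
    exact pow_le_pow_right₀ hz1 (Nat.pow_le_pow_right (by norm_num) hj)
  have hT2 : 2 ≤ T := (hy2 J)
  have hT1 : 1 ≤ T := by linarith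
  have hT0 : 0 < T := by linarith
  have hNT : N = T ^ (40 * ρ) := by rw [hN, hT, ← pow_mul]; congr 1; ring
  -- the basic consequence of having no large Sidon set
  have fact : ∀ j, j ≤ J → ∀ C : Finset (ZMod p), (C ⊆ A ∨ C ⊆ B) → N / y j ^ 2 ≤ C.card →
      T ^ (10 * ρ) < ((Finset.univ.filter (fun μ : ZMod p => μ ≠ 0 ∧ N / y j ^ 129 ≤ (rep C μ : ℝ))).card : ℝ) := by
    intro j hj C hC hCN
    by_contra hle
    push Not at hle
    have hpos : 1 ≤ 530 ^ (J - j) := Nat.one_le_pow _ _ (by norm_num)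
    have hk2 : 2 ≤ ρ * 530 ^ (J - j) := by
      calc 2 ≤ ρ * 1 := by omega
        _ ≤ _ := Nat.mul_le_mul_left _ hpos
    obtain ⟨k, hk⟩ : ∃ k, ρ * 530 ^ (J - j) = k + 1 := ⟨ρ * 530 ^ (J - j) - 1, by omega⟩
    have hpow : 530 ^ j * 530 ^ (J - j) = 530 ^ J := by rw [← pow_add]; congr 1; omega
    have hyk : ∀ a : ℕ, y j ^ (a * (k + 1)) = z ^ (a * (ρ * 530 ^ J)) := by
      intro a
      simp only [y]
      rw [← pow_mul, ← hk, ← hpow]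
      congr 1
      ring
    have hCle : (C.card : ℝ) ≤ N := by
      rcases hC with h | h
      · rw [hNdef]; exact_mod_cast Finset.card_le_card h
      · rw [hNdef, ← hBA]; exact_mod_cast Finset.card_le_card h
    obtain ⟨S, hSC, hSc, hSr⟩ := dense C (y j) N (hy2 j) k (by omega) (by rw [hyk, hN]) hCN hCle (by
      rw [hyk]
      refine hle.trans (le_of_eq ?_)
      rw [hT, ← pow_mul]; congr 1; ring)
    apply hcon
    refine ⟨S, ?_, ?_, ?_⟩
    · rcases hC with h | h
      · left; exact hSC.trans h
      · right; exact hSC.trans h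
    · intro μ hμ
      refine (hSr μ hμ).trans ?_
      rw [← hk]
      have : 530 ^ (J - j) ≤ 530 ^ J := Nat.pow_le_pow_right (by norm_num) (by omega)
      gcongr
    · refine le_trans ?_ hSc
      rw [hyk]
      gcongr
      exact hyz j
  let s : ℕ → ℝ := fun j => ((pop B (N / y j)).card : ℝ)
  have hydiv : ∀ j, N / y (j + 1) ≤ N / y j ^ 129 := by
    intro j
    rw [← hysucc]
    have := hy2 j
    have h1 : y j ^ 129 ≤ y j ^ 530 := pow_le_pow_right₀ (by linarith) (by norm_num)
    gcongr
  have hone : ∀ j, 1 ≤ y j ^ 2 := fun j => one_le_pow₀ (by linarith [hy2 j])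
  have hs1 : ∀ j, j + 1 ≤ J → T ^ (10 * ρ) ≤ s (j + 1) := by
    intro j hj
    refine (fact j (by omega) B (Or.inr subset_rfl) ?_).le.trans ?_
    · rw [hBA]; exact div_le_self hN0.le (hone j)
    · simp only [s]
      norm_cast
      apply Finset.card_le_card
      intro μ hμ
      exact mem_pop.2 ((hydiv j).trans (Finset.mem_filter.1 hμ).2.2)
  have hB0 : (0 : ZMod p) ∉ B := by
    intro h
    obtain ⟨x, -, hx⟩ := Finset.mem_image.1 h
    exact pow_ne_zero _ hg0 hx
  have hBN : (B.card : ℝ) = N := by rw [hBA]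
  have hgrow : ∀ j, j + 2 ≤ J → T * s (j + 1) ≤ s (j + 2) := by
    intro j hj
    by_contra hlt
    push Not at hlt
    refine core B hB0 (by rw [hBN]; exact hAp) (y (j + 1)) T (hy2 _) (by rw [hysucc]; exact hyT _ (by omega))
      e (10 * ρ - 1) he (by omega) ?_ ?_ ?_ ?_
    · rw [hBN, hNT]; congr 1; omega
    · rw [hBN]
      have : 10 * ρ - 1 + 1 = 10 * ρ := by omega
      rw [this]
      exact hs1 j (by omega)
    · rw [hBN, hysucc]; exact hlt.le
    · intro D hDB hDc
      rw [hBN] at hDc ⊢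
      have hDc2 : (D.card : ℝ) ≤ ((A.filter (fun x => g ^ x.val ∈ D)).card : ℝ) := by
        have : D ⊆ (A.filter (fun x => g ^ x.val ∈ D)).image (fun x => g ^ x.val) := by
          intro d hd
          obtain ⟨x, hx, rfl⟩ := Finset.mem_image.1 (hDB hd)
          exact Finset.mem_image.2 ⟨x, Finset.mem_filter.2 ⟨hx, hd⟩, rfl⟩
        exact_mod_cast (Finset.card_le_card this).trans Finset.card_image_le
      have f1 := fact (j + 1) (by omega) (A.filter (fun x => g ^ x.val ∈ D)) (Or.inl (Finset.filter_subset _ _))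
        (hDc.trans hDc2)
      have f2 := transfer hg A D hA (N / y (j + 1) ^ 129)
      have f3 : ((mpop D (N / y (j + 1) ^ 129 / 2)).card : ℝ) ≤ ((mpop D (N / y (j + 1) ^ 130)).card : ℝ) := by
        norm_cast
        apply Finset.card_le_card
        intro q hq
        simp only [mpop, Finset.mem_filter, Finset.mem_univ, true_and] at hq ⊢
        refine le_trans ?_ hq
        rw [div_div]
        have h2 := hy2 (j + 1)
        have : y (j + 1) ^ 129 * 2 ≤ y (j + 1) ^ 130 := by
          rw [pow_succ (y (j + 1)) 129]
          gcongr
        have h0 : 0 < y (j + 1) := by linarith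
        gcongr
      have f4 : 2 * T ^ (10 * ρ - 1) ≤ T ^ (10 * ρ) := by
        have : 10 * ρ = (10 * ρ - 1) + 1 := by omega
        rw [this, pow_succ', ← this]
        gcongr
      linarith
  have hind : ∀ i, i + 1 ≤ J → T ^ i * T ^ (10 * ρ) ≤ s (i + 1) := by
    intro i
    induction i with
    | zero => intro h; simpa using hs1 0 h
    | succ i ih =>
      intro h
      refine le_trans ?_ (hgrow i (by omega))
      rw [pow_succ', mul_assoc]
      have := ih (by omega)
      gcongr
  obtain ⟨i, rfl⟩ : ∃ i, J = i + 1 := ⟨J - 1, by omega⟩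
  have h1 := hind i le_rfl
  have h2 := pop_card_le B (N / y (i + 1))
  rw [hBN] at h2
  have hyTeq : y (i + 1) = T := rfl
  rw [hyTeq] at h2
  simp only [s] at h1
  rw [hyTeq] at h1
  have h3 : ((pop B (N / T)).card : ℝ) ≤ N * T := by
    rw [← mul_div_assoc, div_le_iff₀ hT0] at h2
    apply le_of_mul_le_mul_right _ hN0
    linarith
  have h4 : T ^ (i + 10 * ρ) ≤ T ^ (40 * ρ + 1) := by
    rw [pow_add, pow_succ, ← hNT]
    exact h1.trans h3
  have h5 := (pow_le_pow_iff_right₀ (by linarith)).1 h4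
  omega

lemma sub_le_rep {F : Type*} [Field F] [DecidableEq F] (S : Finset F) (μ : F) : subPairCount μ S ≤ rep S μ := by
  have : {q : F × F | q.1 ∈ S ∧ q.2 ∈ S ∧ q.1 - q.2 = μ} ⊆
      (((S.filter (fun x => x + μ ∈ S)).image (fun x => (x + μ, x)) : Finset (F × F)) : Set (F × F)) := by
    rintro ⟨a, b⟩ ⟨h1, h2, h3⟩
    simp only at h1 h2 h3
    have h4 : b + μ = a := by rw [← h3]; ring
    simp only [Finset.coe_image, Set.mem_image, Finset.mem_coe, Finset.mem_filter]
    exact ⟨b, ⟨h2, by rw [h4]; exact h1⟩, by rw [h4]⟩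
  unfold subPairCount
  refine (Set.ncard_le_ncard this (Finset.finite_toSet _)).trans ?_
  rw [Set.ncard_coe_finset]
  exact Finset.card_image_le

lemma final (e ρ J : ℕ) (he : e = 25 * 132 * 132 * 132)
    (hρ : e + 11 ≤ 10 * ρ) (hJ : 30 * ρ + 3 ≤ J) :
    ∃ c K c0 : ℝ, 0 < c ∧ 1 ≤ K ∧ 0 < c0 ∧
      ∀ (p : ℕ) [Fact p.Prime],
        ∀ g : ZMod p, IsPrimitiveRoot g (p - 1) →
          ∀ A : Finset (ZMod p), (∀ x ∈ A, x ≠ 0) → (A.card : ℝ) < Real.sqrt p →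
            ∃ S : Finset (ZMod p),
              (S ⊆ A ∨ S ⊆ A.image (fun x => g ^ x.val)) ∧ IsAddSidon K S ∧
              c0 * (A.card : ℝ) ^ ((1 : ℝ) / 2 + c) ≤ S.card := by
  obtain ⟨w, hw⟩ : ∃ w, w = ρ * 530 ^ J := ⟨_, rfl⟩
  have hw1 : 1 ≤ w := by
    rw [hw]
    have : 1 ≤ 530 ^ J := Nat.one_le_pow _ _ (by norm_num)
    nlinarith
  have hw1' : (1:ℝ) ≤ w := by exact_mod_cast hw1
  set M : ℝ := 2 ^ (40 * w) with hM
  have hM1 : 1 ≤ M := one_le_pow₀ (by norm_num)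
  refine ⟨1 / (40 * w), 3 * w, 1 / M ^ 2, by positivity, by linarith, by positivity, ?_⟩
  intro p _ g hg A hA hAp
  have hc1 : 1 / (40 * (w:ℝ)) ≤ 1 := by
    rw [div_le_one (by positivity)]; linarith
  have hc0 : 0 < 1 / (40 * (w:ℝ)) := by positivity
  have hAp2 : (A.card : ℝ) ^ 2 < p := (Real.lt_sqrt (by positivity)).1 hAp
  rcases Finset.eq_empty_or_nonempty A with rfl | hne
  · refine ⟨∅, Or.inl subset_rfl, ?_, ?_⟩
    · intro μ _
      have := sub_le_rep (∅ : Finset (ZMod p)) μ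
      have h2 : rep (∅ : Finset (ZMod p)) μ = 0 := by simp [rep]
      have h3 : subPairCount μ (∅ : Finset (ZMod p)) = 0 := by omega
      rw [h3]; push_cast; positivity
    · rw [Finset.card_empty, Nat.cast_zero, Real.zero_rpow (by positivity)]; simp
  have hA1 : (1:ℝ) ≤ A.card := by exact_mod_cast hne.card_pos
  rcases lt_or_ge (A.card : ℝ) M with hlt | hge
  · obtain ⟨x, hx⟩ := hne
    refine ⟨{x}, Or.inl (by simpa using hx), ?_, ?_⟩
    · intro μ _
      have h1 := sub_le_rep ({x} : Finset (ZMod p)) μ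
      have h2 : rep ({x} : Finset (ZMod p)) μ ≤ 1 := by
        unfold rep
        exact (Finset.card_filter_le _ _).trans (by simp)
      have h3 : (subPairCount μ ({x} : Finset (ZMod p)) : ℝ) ≤ 1 := by exact_mod_cast h1.trans h2
      linarith
    · have h1 : (A.card : ℝ) ^ ((1:ℝ) / 2 + 1 / (40 * w)) ≤ (A.card : ℝ) ^ (2:ℝ) :=
        Real.rpow_le_rpow_of_exponent_le hA1 (by linarith)
      have h2 : (A.card : ℝ) ^ (2:ℝ) ≤ M ^ 2 := by
        rw [Real.rpow_two]; gcongr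
      rw [Finset.card_singleton, Nat.cast_one, one_div, inv_mul_le_iff₀ (by positivity)]
      linarith
  · set z : ℝ := (A.card : ℝ) ^ (1 / (40 * (w:ℝ))) with hz
    have hA0 : (0:ℝ) ≤ A.card := by linarith
    have hz0 : 0 ≤ z := by positivity
    have hzN : (A.card : ℝ) = z ^ (40 * w) := by
      rw [hz, ← Real.rpow_natCast, ← Real.rpow_mul hA0]
      push_cast
      rw [one_div_mul_cancel (by positivity), Real.rpow_one]
    have hz2 : 2 ≤ z := by
      rw [hzN, hM] at hge
      exact (pow_le_pow_iff_left₀ (by norm_num) hz0 (by omega)).1 hge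
    obtain ⟨S, h1, h2, h3⟩ := main hg A hA hAp2 e ρ J he hρ hJ z hz2 (by rw [← hw]; exact hzN)
    rw [← hw] at h2 h3
    refine ⟨S, h1, ?_, ?_⟩
    · intro μ hμ
      exact_mod_cast (sub_le_rep S μ).trans (h2 μ hμ)
    · have h4 : (A.card : ℝ) ^ ((1:ℝ) / 2 + 1 / (40 * w)) = z ^ (20 * w) * z := by
        rw [Real.rpow_add (by linarith), ← hz]
        congr 1
        rw [hzN, ← Real.rpow_natCast, ← Real.rpow_natCast, ← Real.rpow_mul hz0]
        congr 1
        push_cast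
        ring
      rw [h4]
      refine le_trans ?_ h3
      have h5 : 1 / M ^ 2 ≤ 1 := by
        rw [div_le_one (by positivity)]; exact one_le_pow₀ hM1
      exact mul_le_of_le_one_left (mul_nonneg (pow_nonneg hz0 _) hz0) h5
end S10

theorem stmt10 :
    ∃ c K c0 : ℝ, 0 < c ∧ 1 ≤ K ∧ 0 < c0 ∧
      ∀ (p : ℕ) [Fact p.Prime],
        ∀ g : ZMod p, IsPrimitiveRoot g (p - 1) →
          ∀ A : Finset (ZMod p), (∀ x ∈ A, x ≠ 0) → (A.card : ℝ) < Real.sqrt p →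
            ∃ S : Finset (ZMod p),
              (S ⊆ A ∨ S ⊆ A.image (fun x => g ^ x.val)) ∧ IsAddSidon K S ∧
              c0 * (A.card : ℝ) ^ ((1 : ℝ) / 2 + c) ≤ S.card := by
  obtain ⟨e, he⟩ : ∃ e : ℕ, e = 25 * 132 * 132 * 132 := ⟨_, rfl⟩
  exact S10.final e (e + 11) (30 * (e + 11) + 3) he (by omega) (by omega)
end

section
/- There is an absolute constant C > 0 such that for every integer k ≥ 1 and every integer N ≥ 1 there exists a finite set A ⊆ ℝ with |A| ≥ N and max{ Sid^×_k(A), Sid^×_k(A+1) } ≤ C·k^{1/2}·|A|^{3/4}, where A + 1 = {a + 1 : a ∈ A}. -/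
open scoped BigOperators

/-- The number of pairs `(x, y) ∈ S × S` with `x = lam * y`. -/
noncomputable def mulPairCount {F : Type*} [Mul F] (lam : F) (S : Finset F) : ℕ :=
  Set.ncard {q : F × F | q.1 ∈ S ∧ q.2 ∈ S ∧ q.1 = lam * q.2}

/-- `S` is multiplicatively `k`-Sidon: for every `lam ≠ 1` the number of pairs
`(x, y) ∈ S × S` with `x = lam * y` is at most `k`. -/
def IsMulSidon {F : Type*} [MulOneClass F] (K : ℝ) (S : Finset F) : Prop :=
  ∀ lam : F, lam ≠ 1 → (mulPairCount lam S : ℝ) ≤ K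

lemma sidon_aux (k : ℕ) (X V S : Finset ℝ) (hV : ∀ v ∈ V, 0 < v) (hX : ∀ x ∈ X, 0 < x)
    (hS : ∀ s ∈ S, ∃ x ∈ X, ∃ v ∈ V, s = x / v) (hk : IsMulSidon (k : ℝ) S) :
    S.card ^ 2 ≤ V.card * (S.card + k * (X.card * X.card)) := by
  classical
  choose! x hx v hv hs using hS
  set P := (S ×ˢ S).filter (fun p => v p.1 = v p.2) with hP
  have hfib : ∀ w ∈ V, (P.filter (fun p => v p.1 = w)).card
      = (S.filter (fun s => v s = w)).card ^ 2 := by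
    intro w _
    rw [sq, ← Finset.card_product]
    congr 1
    ext p
    simp only [hP, Finset.mem_filter, Finset.mem_product]
    constructor
    · rintro ⟨⟨⟨h1, h2⟩, h3⟩, h4⟩
      exact ⟨⟨h1, h4⟩, h2, h3 ▸ h4⟩
    · rintro ⟨⟨h1, h4⟩, h2, h3⟩
      exact ⟨⟨⟨h1, h2⟩, h4.trans h3.symm⟩, h4⟩
  have h1 : S.card ^ 2 ≤ V.card * P.card := by
    rw [Finset.card_eq_sum_card_fiberwise (s := S) (f := v) (t := V) (fun s hs => hv s hs),
      Finset.card_eq_sum_card_fiberwise (s := P) (f := fun p => v p.1) (t := V)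
        (fun p hp => hv _ (Finset.mem_product.1 (Finset.mem_filter.1 hp).1).1),
      Finset.sum_congr rfl hfib]
    exact sq_sum_le_card_mul_sum_sq
  have h2 : (P.filter (fun p => p.1 = p.2)).card ≤ S.card := by
    apply Finset.card_le_card_of_injOn (fun p => p.1)
    · intro p hp
      simp only [hP, Finset.coe_filter, Finset.mem_filter, Finset.mem_product,
        Set.mem_ofPred_eq] at hp
      exact hp.1.1.1
    · intro p hp q hq h
      simp only [Finset.coe_filter, Set.mem_ofPred_eq] at hp hq
      exact Prod.ext h (by rw [← hp.2, ← hq.2]; exact h)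
  have h3 : (P.filter (fun p => ¬ p.1 = p.2)).card ≤ k * (X ×ˢ X).card := by
    apply Finset.card_le_mul_card_image_of_maps_to (f := fun p => (x p.1, x p.2))
    · intro p hp
      simp only [hP, Finset.mem_filter, Finset.mem_product] at hp
      exact Finset.mem_product.2 ⟨hx _ hp.1.1.1, hx _ hp.1.1.2⟩
    · rintro ⟨b1, b2⟩ hb
      have hb := Finset.mem_product.1 hb
      have hb2 := hX _ hb.2
      have key : ∀ p ∈ (P.filter (fun p => ¬ p.1 = p.2)).filter
          (fun p => (x p.1, x p.2) = (b1, b2)),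
          p.1 ∈ S ∧ p.2 ∈ S ∧ p.1 = (b1 / b2) * p.2 ∧ p.1 ≠ p.2 := by
        intro p hp
        simp only [hP, Finset.mem_filter, Finset.mem_product, Prod.mk.injEq] at hp
        obtain ⟨⟨⟨⟨m1, m2⟩, e⟩, ne⟩, e1, e2⟩ := hp
        refine ⟨m1, m2, ?_, ne⟩
        have := hV _ (hv _ m2)
        have h5 := hs _ m1
        have h6 := hs _ m2
        rw [e, e1] at h5
        rw [e2] at h6
        have e5 : p.1 * v p.2 = b1 := by rw [eq_div_iff this.ne'] at h5; exact h5
        have e6 : p.2 * v p.2 = b2 := by rw [eq_div_iff this.ne'] at h6; exact h6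
        rw [div_mul_eq_mul_div, eq_div_iff hb2.ne', ← e5, ← e6]
        ring
      by_cases hl : b1 / b2 = 1
      · rw [Finset.card_eq_zero.2]
        · exact Nat.zero_le _
        · rw [Finset.eq_empty_iff_forall_notMem]
          intro p hp
          have := key p hp
          rw [hl, one_mul] at this
          exact this.2.2.2 this.2.2.1
      · have h7 : mulPairCount (b1 / b2) S ≤ k := by exact_mod_cast hk _ hl
        refine le_trans ?_ h7
        rw [← Set.ncard_coe_finset]
        apply Set.ncard_le_ncard
        · intro p hp
          have := key p (Finset.mem_coe.1 hp)
          exact ⟨this.1, this.2.1, this.2.2.1⟩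
        · apply Set.Finite.subset (S ×ˢ S).finite_toSet
          rintro p ⟨h, h', _⟩
          exact Finset.mem_coe.2 (Finset.mem_product.2 ⟨h, h'⟩)
  have h4 := Finset.card_filter_add_card_filter_not (s := P) (fun p => p.1 = p.2)
  rw [Finset.card_product] at h3
  refine h1.trans (Nat.mul_le_mul_left _ ?_)
  omega

theorem stmt11 :
    ∃ C : ℝ, 0 < C ∧
      ∀ k : ℕ, 1 ≤ k → ∀ N : ℕ, 1 ≤ N →
        ∃ A : Finset ℝ, N ≤ A.card ∧
          ∀ S : Finset ℝ, (S ⊆ A ∨ S ⊆ A.image (· + 1)) → IsMulSidon (k : ℝ) S →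
            (S.card : ℝ) ≤ C * Real.sqrt k * (A.card : ℝ) ^ ((3 : ℝ) / 4) := by
  classical
  refine ⟨3, by norm_num, fun k hk m hm => ?_⟩
  set I := Finset.Icc 1 m with hI
  have hIc : I.card = m := by simp [hI]
  set V : Finset ℝ := I.image (fun j : ℕ => √2 + (j : ℝ)) with hVd
  have hVc : V.card ≤ m := Finset.card_image_le.trans hIc.le
  have hs2 : (0 : ℝ) < √2 := by positivity
  have hV : ∀ v ∈ V, 0 < v := by
    intro v hv
    obtain ⟨j, _, rfl⟩ := Finset.mem_image.1 hv
    positivity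
  set A : Finset ℝ := (I ×ˢ I).image (fun p : ℕ × ℕ => (p.1 : ℝ) / (√2 + (p.2 : ℝ))) with hA
  have hAc : A.card = m * m := by
    rw [hA, Finset.card_image_of_injOn, Finset.card_product, hIc]
    rintro ⟨a, b⟩ hab ⟨c, d⟩ hcd h
    simp only [hI, Finset.coe_product, Set.mem_prod, Finset.mem_coe, Finset.mem_Icc] at hab hcd
    have hb : (0 : ℝ) < √2 + b := by positivity
    have hd : (0 : ℝ) < √2 + d := by positivity
    simp only at h
    rw [div_eq_div_iff hb.ne' hd.ne'] at h
    have hac : a = c := by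
      by_contra hne
      have hne' : (a : ℝ) - c ≠ 0 := by
        rw [sub_ne_zero]; exact_mod_cast hne
      apply irrational_sqrt_two
      refine ⟨((c : ℚ) * b - a * d) / (a - c), ?_⟩
      push_cast
      rw [div_eq_iff hne']
      linarith
    subst hac
    have ha : (a : ℝ) ≠ 0 := by
      have := hab.1.1
      positivity
    have := mul_left_cancel₀ ha h
    have h' : (b : ℝ) = d := by linarith
    have h'' : b = d := by exact_mod_cast h'
    rw [h'']
  refine ⟨A, by rw [hAc]; nlinarith, fun S hSA hSk => ?_⟩
  have hSc : S.card ≤ m * m := by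
    rw [← hAc]
    rcases hSA with h | h
    · exact Finset.card_le_card h
    · exact (Finset.card_le_card h).trans Finset.card_image_le
  have main : ∃ X : Finset ℝ, X.card ≤ 2 * m ∧ (∀ x ∈ X, 0 < x) ∧
      ∀ s ∈ S, ∃ x ∈ X, ∃ v ∈ V, s = x / v := by
    rcases hSA with h | h
    · refine ⟨I.image (fun j : ℕ => (j : ℝ)), Finset.card_image_le.trans (by omega), ?_, ?_⟩
      · intro x hx
        obtain ⟨j, hj, rfl⟩ := Finset.mem_image.1 hx
        have := (Finset.mem_Icc.1 hj).1
        positivity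
      · intro s hs
        obtain ⟨⟨a, b⟩, hp, rfl⟩ := Finset.mem_image.1 (h hs)
        have hp := Finset.mem_product.1 hp
        exact ⟨_, Finset.mem_image_of_mem _ hp.1, _, Finset.mem_image_of_mem _ hp.2, rfl⟩
    · refine ⟨(Finset.Icc 1 (2 * m)).image (fun j : ℕ => √2 + (j : ℝ)),
        Finset.card_image_le.trans (by simp), ?_, ?_⟩
      · intro x hx
        obtain ⟨j, hj, rfl⟩ := Finset.mem_image.1 hx
        positivity
      · intro s hs
        obtain ⟨t, ht, rfl⟩ := Finset.mem_image.1 (h hs)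
        obtain ⟨⟨a, b⟩, hp, rfl⟩ := Finset.mem_image.1 ht
        have hp := Finset.mem_product.1 hp
        have h1 := Finset.mem_Icc.1 hp.1
        have h2 := Finset.mem_Icc.1 hp.2
        simp only at h1 h2
        refine ⟨√2 + ((a + b : ℕ) : ℝ), Finset.mem_image_of_mem (fun j : ℕ => √2 + (j : ℝ))
          (Finset.mem_Icc.2 ⟨by omega, by omega⟩), _, Finset.mem_image_of_mem _ hp.2, ?_⟩
        have hb : (0 : ℝ) < √2 + b := by positivity
        simp only
        rw [eq_div_iff hb.ne', add_mul, div_mul_cancel₀ _ hb.ne']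
        push_cast
        ring
  obtain ⟨X, hXc, hX, hS⟩ := main
  have key := sidon_aux k X V S hV hX hS hSk
  have key2 : S.card ^ 2 ≤ 9 * k * m ^ 3 := by
    calc S.card ^ 2 ≤ V.card * (S.card + k * (X.card * X.card)) := key
      _ ≤ m * (m * m + k * ((2 * m) * (2 * m))) := by gcongr
      _ = 1 * m ^ 3 + 4 * k * m ^ 3 := by ring
      _ ≤ k * m ^ 3 + 4 * k * m ^ 3 := by gcongr
      _ ≤ 9 * k * m ^ 3 := by nlinarith [Nat.zero_le (k * m ^ 3)]
  refine le_of_pow_le_pow_left₀ two_ne_zero (by positivity) ?_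
  have e : (((A.card : ℝ) ^ ((3 : ℝ) / 4))) ^ 2 = (m : ℝ) ^ 3 := by
    rw [hAc, ← Real.rpow_natCast, ← Real.rpow_mul (by positivity)]
    push_cast
    rw [← sq, ← Real.rpow_natCast, ← Real.rpow_mul (by positivity), ← Real.rpow_natCast]
    norm_num
  rw [mul_pow, mul_pow, e, Real.sq_sqrt (by positivity)]
  norm_num
  exact_mod_cast key2
end
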